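/- arXiv:1412.3782 — 2 statements merged into one kernel-verified Lean document; each statement's English description precedes it below -/
import Mathlib

section
/- Let δ = 2×10^{-3}. The map 𝒩 has a unique fixed point w in the closed ball {w ∈ 𝒮 : ‖w - w_0‖_{10} ≤ δ·‖w_0‖_{10}}; moreover this fixed point satisfies |w(x) - w_0(x)| ≤ 0.0167·‖w_0‖_{10}·x^{-45/4} and |w'(x) - w_0'(x)| ≤ 0.29·x^{-11} for all x ≥ L. -/
/-!
For real `F` the two conjugate terms in the sum over `j` combine into the real operator
`KK F x = (2/a) x^{-5/8} ∫_x^∞ t^{3/8} sin(b(t^{5/4} - x^{5/4})) F(t) dt` (`green_eq`). Hence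
`w₀ = KK N₀` and `𝒩[w] = w₀ - KK (RR w)`, where `RR w = N₀ - N(w,·)` collects the terms linear and
quadratic in `w`.

Estimating `KK N₀` by absolute values loses a factor `x^{5/4}`; one integration by parts against
the phase (`KK_N₀_eq`) recovers it and gives `‖w₀‖₁₀ ≤ 7.481` (`w₀_bound`). In particular the
supremum defining `‖w₀‖₁₀` is finite.

For the remainder absolute values suffice: on the ball `|RR w| ≤ 0.391·1.002‖w₀‖₁₀ x^{-12}`, the
linear term dominating (`RR_sub_bound`), and `KK` takes a bound `q x^{-12}` to
`0.042525 q x^{-45/4}` (`KK_bound`). This yields `|𝒩[w] - w₀| ≤ 0.0167‖w₀‖₁₀ x^{-45/4}`. Since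
`x^{-5/4} ≤ 0.1188` on `[L,∞)`, `𝒩` maps the ball to itself (`InBall.step`), and by the same
estimate applied to `RR w₁ - RR w₂` it is a contraction (`KK_diff`). Banach's theorem in the space
of bounded continuous functions `x^{10} w(x)` gives the fixed point (`exists_fixed`). Its derivative
is controlled by differentiating under the oscillating kernel (`KK_deriv`, `deriv_bound`).
-/

open Set Complex MeasureTheory

noncomputable section

/-- `L = 11/2`. -/
def LP1 : ℝ := 11/2

/-- `b = (4/5)·24^{1/4}`. -/
def bP1 : ℝ := (4/5) * (24 : ℝ) ^ ((1 : ℝ)/4)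

/-- `a = (5/2)·b`. -/
def aP1 : ℝ := (5/2) * bP1

/-- `N₀(x) = -(4412401/(98304√6)) x^{-19/2} [1 - (1225/(90049√6)) x^{-5/2}
  + (30625/2161176) x^{-5}]`. -/
def N₀ (x : ℝ) : ℝ :=
  -(4412401 / (98304 * Real.sqrt 6)) * x ^ (-(19 : ℝ)/2) *
    (1 - (1225 / (90049 * Real.sqrt 6)) * x ^ (-(5 : ℝ)/2) +
      (30625 / 2161176) * x ^ (-(5 : ℝ)))

/-- `𝒢_j(x) = x^{-5/8} e^{(-1)^j i b x^{5/4}}`, so that `𝒢₁(x) = x^{-5/8} e^{-i b x^{5/4}}`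
and `𝒢₂(x) = x^{-5/8} e^{i b x^{5/4}}`. -/
def calG (j : ℕ) (x : ℝ) : ℂ :=
  ((x ^ (-(5 : ℝ)/8) : ℝ) : ℂ) *
    Complex.exp ((-1 : ℂ) ^ j * Complex.I * (bP1 : ℂ) * ((x ^ ((5 : ℝ)/4) : ℝ) : ℂ))

/-- `w₀(x) = Σ_{j=1}^{2} ((-1)^j/(i a)) 𝒢_j(x) ∫_∞^x 𝒢_{3-j}(t) t N₀(t) dt`
(the integral `∫_∞^x` being `-∫_x^∞`). -/
def w₀c (x : ℝ) : ℂ :=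
  ∑ j ∈ Finset.Icc 1 2,
    ((-1 : ℂ) ^ j / (Complex.I * (aP1 : ℂ))) * calG j x *
      (-(∫ t in Set.Ioi x, calG (3 - j) t * (t : ℂ) * ((N₀ t : ℝ) : ℂ)))

/-- The real-valued `w₀` (for real `x ≥ L`, `w₀(x)` is real). -/
def w₀r (x : ℝ) : ℝ := (w₀c x).re

/-- `‖w₀‖₁₀ = sup_{x ≥ L} x¹⁰ |w₀(x)|`. -/
def W₀norm : ℝ := ⨆ x : Set.Ici LP1, ((x : ℝ)) ^ (10 : ℕ) * |w₀r x|

/-- `N(w,x) = N₀(x) - (25/(64x²))[1 - (49/(25√6)) x^{-5/2} + (49/12) x^{-5}] w - √(6x) w²`. -/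
def Nfun (w : ℝ → ℝ) (x : ℝ) : ℝ :=
  N₀ x - (25 / (64 * x ^ 2)) *
      (1 - (49 / (25 * Real.sqrt 6)) * x ^ (-(5 : ℝ)/2) + (49 / 12) * x ^ (-(5 : ℝ))) * w x -
    Real.sqrt (6 * x) * (w x) ^ 2

/-- `𝒩[w](x) = Σ_{j=1}^{2} ((-1)^j/(i a)) 𝒢_j(x) ∫_∞^x 𝒢_{3-j}(t) t N(w(t),t) dt`. -/
def calN (w : ℝ → ℝ) (x : ℝ) : ℂ :=
  ∑ j ∈ Finset.Icc 1 2,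
    ((-1 : ℂ) ^ j / (Complex.I * (aP1 : ℂ))) * calG j x *
      (-(∫ t in Set.Ioi x, calG (3 - j) t * (t : ℂ) * ((Nfun w t : ℝ) : ℂ)))

/-! ### The real form of the integral operator -/

/-- The integral operator of the problem in real form:
`KK F x = (2/a) x^{-5/8} ∫_x^∞ t^{3/8} sin(b(t^{5/4} - x^{5/4})) F(t) dt`. The two conjugate terms
of the sum over `j` combine into it (`green_eq`). -/
def KK (F : ℝ → ℝ) (x : ℝ) : ℝ :=
  2 / aP1 * x ^ (-(5 : ℝ)/8) *
    ∫ t in Ioi x, Real.sin (bP1 * (t ^ ((5 : ℝ)/4) - x ^ ((5 : ℝ)/4))) * (t ^ ((3 : ℝ)/8) * F t)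

/-- The companion of `KK` with a cosine kernel, which appears in the derivative of `KK F`. -/
def JJ (F : ℝ → ℝ) (x : ℝ) : ℝ :=
    ∫ t in Ioi x, Real.cos (bP1 * (t ^ ((5 : ℝ)/4) - x ^ ((5 : ℝ)/4))) * (t ^ ((3 : ℝ)/8) * F t)

/-- Sources `F` to which `KK` applies without junk integrals: continuous on `[L,∞)`, with
`t^{3/8} F(t)` integrable there. -/
def Adm (F : ℝ → ℝ) : Prop :=
  ContinuousOn F (Ici LP1) ∧ IntegrableOn (fun t => t ^ ((3 : ℝ)/8) * F t) (Ioi LP1)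

/-- The part `N₀ - N(w,·)` of the source that depends on `w`, so that `𝒩[w] = w₀ - KK (RR w)`. -/
def RR (w : ℝ → ℝ) (x : ℝ) : ℝ :=
  (25 / (64 * x ^ 2)) *
      (1 - (49 / (25 * Real.sqrt 6)) * x ^ (-(5 : ℝ)/2) + (49 / 12) * x ^ (-(5 : ℝ))) * w x +
    Real.sqrt (6 * x) * (w x) ^ 2

lemma LP1_pos : 0 < LP1 := by norm_num [LP1]

lemma pos_of_mem {x : ℝ} (hx : x ∈ Ici LP1) : 0 < x := LP1_pos.trans_le hx

lemma bP1_pos : 0 < bP1 := by unfold bP1; positivity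

lemma aP1_pos : 0 < aP1 := by unfold aP1; have := bP1_pos; positivity

lemma aP1_gt : 2 * 2.2133 ≤ aP1 := by
  have : (2.2133 : ℝ) ≤ (24 : ℝ) ^ ((1 : ℝ)/4) := by
    have h : ((2.2133 : ℝ) ^ 4) ^ ((1 : ℝ)/4) = 2.2133 := by
      rw [← Real.rpow_natCast, ← Real.rpow_mul (by norm_num)]; norm_num
    rw [← h]
    exact Real.rpow_le_rpow (by norm_num) (by norm_num) (by norm_num)
  unfold aP1 bP1
  linarith

/-- With `a = 2·24^{1/4}` this gives `(2/a)·(4/(5b)) = 1/√24`, the constant in the bound on `w₀`. -/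
lemma aP1_mul_bP1 : aP1 * bP1 = 8 / 5 * Real.sqrt 24 := by
  have : (24 : ℝ) ^ ((1 : ℝ)/4) * (24 : ℝ) ^ ((1 : ℝ)/4) = Real.sqrt 24 := by
    rw [← Real.rpow_add (by norm_num), Real.sqrt_eq_rpow]; norm_num
  unfold aP1 bP1
  rw [← this]; ring

lemma Adm.sub {F G : ℝ → ℝ} (hF : Adm F) (hG : Adm G) : Adm (fun t => F t - G t) := by
  refine ⟨hF.1.sub hG.1, ?_⟩
  refine (hF.2.sub hG.2).congr ?_
  exact Filter.Eventually.of_forall fun t => by simp; ring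

lemma Adm.integrableOn {F : ℝ → ℝ} (hF : Adm F) {x : ℝ} (hx : x ∈ Ici LP1) :
    IntegrableOn (fun t => t ^ ((3 : ℝ)/8) * F t) (Ioi x) :=
  hF.2.mono_set (Ioi_subset_Ioi hx)

lemma cont_phase : Continuous fun t : ℝ => t ^ ((5 : ℝ)/4) :=
  Real.continuous_rpow_const (by norm_num)

lemma integrable_bdd {μ : Measure ℝ} {g : ℝ → ℝ} (hg : Integrable g μ) {s : ℝ → ℝ}
    (hs : Continuous s) (hb : ∀ t, |s t| ≤ 1) : Integrable (fun t => s t * g t) μ :=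
  hg.bdd_mul hs.aestronglyMeasurable (Filter.Eventually.of_forall hb)

lemma calG_eq_one (x : ℝ) : calG 1 x = ((x ^ (-(5 : ℝ)/8) : ℝ) : ℂ) *
    ((Real.cos (bP1 * x ^ ((5 : ℝ)/4)) : ℝ) - (Real.sin (bP1 * x ^ ((5 : ℝ)/4)) : ℝ) * I) := by
  unfold calG
  rw [show ((-1 : ℂ) ^ 1 * I * (bP1 : ℂ) * ((x ^ ((5 : ℝ)/4) : ℝ) : ℂ)) =
    ((-(bP1 * x ^ ((5 : ℝ)/4)) : ℝ) : ℂ) * I by push_cast; ring, Complex.exp_mul_I,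
    ← Complex.ofReal_cos, ← Complex.ofReal_sin, Real.cos_neg, Real.sin_neg]
  push_cast; ring

lemma calG_eq_two (x : ℝ) : calG 2 x = ((x ^ (-(5 : ℝ)/8) : ℝ) : ℂ) *
    ((Real.cos (bP1 * x ^ ((5 : ℝ)/4)) : ℝ) + (Real.sin (bP1 * x ^ ((5 : ℝ)/4)) : ℝ) * I) := by
  unfold calG
  rw [show ((-1 : ℂ) ^ 2 * I * (bP1 : ℂ) * ((x ^ ((5 : ℝ)/4) : ℝ) : ℂ)) =
    (((bP1 * x ^ ((5 : ℝ)/4)) : ℝ) : ℂ) * I by push_cast; ring, Complex.exp_mul_I,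
    ← Complex.ofReal_cos, ← Complex.ofReal_sin]

/-- `∫_x^∞ cos(b t^{5/4}) t^{3/8} F(t) dt`: here `x` enters only through the endpoint, so the
fundamental theorem of calculus applies. -/
def Cint (F : ℝ → ℝ) (x : ℝ) : ℝ :=
  ∫ t in Ioi x, Real.cos (bP1 * t ^ ((5 : ℝ)/4)) * (t ^ ((3 : ℝ)/8) * F t)

/-- `∫_x^∞ sin(b t^{5/4}) t^{3/8} F(t) dt`, the sine counterpart of `Cint`. -/
def Sint (F : ℝ → ℝ) (x : ℝ) : ℝ :=
  ∫ t in Ioi x, Real.sin (bP1 * t ^ ((5 : ℝ)/4)) * (t ^ ((3 : ℝ)/8) * F t)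

lemma cont_cos : Continuous fun t : ℝ => Real.cos (bP1 * t ^ ((5 : ℝ)/4)) :=
  Real.continuous_cos.comp (continuous_const.mul cont_phase)

lemma cont_sin : Continuous fun t : ℝ => Real.sin (bP1 * t ^ ((5 : ℝ)/4)) :=
  Real.continuous_sin.comp (continuous_const.mul cont_phase)

lemma Adm.int_cos {F : ℝ → ℝ} (hF : Adm F) {x : ℝ} (hx : x ∈ Ici LP1) :
    IntegrableOn (fun t => Real.cos (bP1 * t ^ ((5 : ℝ)/4)) * (t ^ ((3 : ℝ)/8) * F t)) (Ioi x) :=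
  integrable_bdd (hF.integrableOn hx) cont_cos fun _ => Real.abs_cos_le_one _

lemma Adm.int_sin {F : ℝ → ℝ} (hF : Adm F) {x : ℝ} (hx : x ∈ Ici LP1) :
    IntegrableOn (fun t => Real.sin (bP1 * t ^ ((5 : ℝ)/4)) * (t ^ ((3 : ℝ)/8) * F t)) (Ioi x) :=
  integrable_bdd (hF.integrableOn hx) cont_sin fun _ => Real.abs_sin_le_one _

lemma KK_eq {F : ℝ → ℝ} (hF : Adm F) {x : ℝ} (hx : x ∈ Ici LP1) :
    KK F x = 2 / aP1 * x ^ (-(5 : ℝ)/8) * (Real.cos (bP1 * x ^ ((5 : ℝ)/4)) * Sint F x -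
      Real.sin (bP1 * x ^ ((5 : ℝ)/4)) * Cint F x) := by
  unfold KK Sint Cint
  congr 1
  rw [← integral_const_mul, ← integral_const_mul, ← integral_sub ((hF.int_sin hx).const_mul _)
    ((hF.int_cos hx).const_mul _)]
  congr 1
  ext t
  rw [mul_sub, Real.sin_sub]; ring

lemma JJ_eq {F : ℝ → ℝ} (hF : Adm F) {x : ℝ} (hx : x ∈ Ici LP1) :
    JJ F x = Real.cos (bP1 * x ^ ((5 : ℝ)/4)) * Cint F x +
      Real.sin (bP1 * x ^ ((5 : ℝ)/4)) * Sint F x := by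
  unfold JJ Sint Cint
  rw [← integral_const_mul, ← integral_const_mul, ← integral_add ((hF.int_cos hx).const_mul _)
    ((hF.int_sin hx).const_mul _)]
  congr 1
  ext t
  rw [mul_sub, Real.cos_sub]; ring

lemma KK_sub {F G : ℝ → ℝ} (hF : Adm F) (hG : Adm G) {x : ℝ} (hx : x ∈ Ici LP1) :
    KK (fun t => F t - G t) x = KK F x - KK G x := by
  have hS : Sint (fun t => F t - G t) x = Sint F x - Sint G x := by
    unfold Sint
    rw [← integral_sub (hF.int_sin hx) (hG.int_sin hx)]
    congr 1; ext t; ring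
  have hC : Cint (fun t => F t - G t) x = Cint F x - Cint G x := by
    unfold Cint
    rw [← integral_sub (hF.int_cos hx) (hG.int_cos hx)]
    congr 1; ext t; ring
  rw [KK_eq hF hx, KK_eq hG hx, KK_eq (hF.sub hG) hx, hS, hC]; ring

lemma rpow_aux {t : ℝ} (ht : 0 < t) : t ^ (-(5 : ℝ)/8) * t = t ^ ((3 : ℝ)/8) := by
  nth_rewrite 2 [← Real.rpow_one t]
  rw [← Real.rpow_add ht]; norm_num

lemma green_eq {F : ℝ → ℝ} (hF : Adm F) {x : ℝ} (hx : x ∈ Ici LP1) :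
    ∑ j ∈ Finset.Icc 1 2, ((-1 : ℂ) ^ j / (Complex.I * (aP1 : ℂ))) * calG j x *
      (-(∫ t in Set.Ioi x, calG (3 - j) t * (t : ℂ) * ((F t : ℝ) : ℂ))) = (KK F x : ℂ) := by
  have hx0 := pos_of_mem hx
  have e1 : ∫ t in Set.Ioi x, calG 1 t * (t : ℂ) * ((F t : ℝ) : ℂ) =
      (Cint F x : ℂ) - (Sint F x : ℂ) * I := by
    unfold Cint Sint
    rw [← integral_complex_ofReal, ← integral_complex_ofReal, ← integral_mul_const,
      ← integral_sub (hF.int_cos hx).ofReal ((hF.int_sin hx).ofReal.mul_const _)]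
    refine setIntegral_congr_fun measurableSet_Ioi fun t ht => ?_
    have ht0 : 0 < t := hx0.trans ht
    simp only [calG_eq_one]
    rw [← rpow_aux ht0]; push_cast; ring
  have e2 : ∫ t in Set.Ioi x, calG 2 t * (t : ℂ) * ((F t : ℝ) : ℂ) =
      (Cint F x : ℂ) + (Sint F x : ℂ) * I := by
    unfold Cint Sint
    rw [← integral_complex_ofReal, ← integral_complex_ofReal, ← integral_mul_const,
      ← integral_add (hF.int_cos hx).ofReal ((hF.int_sin hx).ofReal.mul_const _)]
    refine setIntegral_congr_fun measurableSet_Ioi fun t ht => ?_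
    have ht0 : 0 < t := hx0.trans ht
    simp only [calG_eq_two]
    rw [← rpow_aux ht0]; push_cast; ring
  have ha : (aP1 : ℂ) ≠ 0 := by exact_mod_cast aP1_pos.ne'
  rw [show Finset.Icc 1 2 = {1, 2} from rfl, Finset.sum_pair (by norm_num)]
  simp only [Nat.reduceSub]
  rw [e1, e2, calG_eq_one, calG_eq_two, KK_eq hF hx]
  push_cast
  field_simp
  ring_nf
  try simp only [Complex.I_sq]
  try ring

/-! ### Differentiation of the operator -/

/-- Derivative of a tail integral. It is one-sided at `L`, since `g` is controlled only on `[L,∞)`;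
the proof replaces `g` by its continuous constant extension to the left of `L`. -/
lemma deriv_tail {g : ℝ → ℝ} (hc : ContinuousOn g (Ici LP1)) (hi : IntegrableOn g (Ioi LP1))
    {x : ℝ} (hx : x ∈ Ici LP1) :
    HasDerivWithinAt (fun y => ∫ t in Ioi y, g t) (-g x) (Ici LP1) x := by
  set G : ℝ → ℝ := fun t => g (max LP1 t) with hG
  have hGc : Continuous G :=
    hc.comp_continuous (continuous_const.max continuous_id) fun t => mem_Ici.2 (le_max_left _ _)
  have hGg : ∀ t ∈ Ici LP1, G t = g t := fun t ht => by
    simp only [hG]; rw [max_eq_right ht]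
  have h1 : HasDerivAt (fun y => (∫ t in Ioi LP1, g t) - ∫ t in LP1..y, G t) (-G x) x := by
    have := intervalIntegral.integral_hasDerivAt_right (a := LP1) (b := x)
      (hGc.intervalIntegrable _ _) hGc.aestronglyMeasurable.stronglyMeasurableAtFilter
      hGc.continuousAt
    exact this.const_sub _
  rw [hGg x hx] at h1
  refine h1.hasDerivWithinAt.congr_of_mem (fun y hy => ?_) hx
  have hy' : LP1 ≤ y := hy
  have : ∫ t in LP1..y, G t = ∫ t in Ioc LP1 y, g t := by
    rw [intervalIntegral.integral_of_le hy']
    exact setIntegral_congr_fun measurableSet_Ioc fun t ht => hGg t ht.1.le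
  rw [this, ← Ioc_union_Ioi_eq_Ioi hy', setIntegral_union (Ioc_disjoint_Ioi le_rfl)
    measurableSet_Ioi (hi.mono_set Ioc_subset_Ioi_self) (hi.mono_set (Ioi_subset_Ioi hy'))]
  ring

lemma cont_w' {F : ℝ → ℝ} (hF : ContinuousOn F (Ici LP1)) :
    ContinuousOn (fun t => t ^ ((3 : ℝ)/8) * F t) (Ici LP1) :=
  (Real.continuous_rpow_const (by norm_num)).continuousOn.mul hF

lemma cont_w {F : ℝ → ℝ} (hF : Adm F) : ContinuousOn (fun t => t ^ ((3 : ℝ)/8) * F t) (Ici LP1) :=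
  (Real.continuous_rpow_const (by norm_num)).continuousOn.mul hF.1

/-- The boundary terms cancel because the kernel vanishes at `t = x`, and `(2/a)·(5b/4) = 1` makes
the coefficient of `JJ` a pure power of `x`. -/
lemma KK_deriv {F : ℝ → ℝ} (hF : Adm F) {x : ℝ} (hx : x ∈ Ici LP1) :
    HasDerivWithinAt (KK F) (-(5/8) / x * KK F x - x ^ (-(3 : ℝ)/8) * JJ F x) (Ici LP1) x := by
  have hx0 := pos_of_mem hx
  have hS : HasDerivWithinAt (Sint F) _ (Ici LP1) x :=
    deriv_tail (cont_sin.continuousOn.mul (cont_w hF)) (hF.int_sin self_mem_Ici) hx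
  have hC : HasDerivWithinAt (Cint F) _ (Ici LP1) x :=
    deriv_tail (cont_cos.continuousOn.mul (cont_w hF)) (hF.int_cos self_mem_Ici) hx
  have hθ : HasDerivAt (fun y : ℝ => bP1 * y ^ ((5 : ℝ)/4)) (bP1 * (5/4 * x ^ ((5 : ℝ)/4 - 1))) x :=
    (Real.hasDerivAt_rpow_const (Or.inl hx0.ne')).const_mul _
  have hp : HasDerivAt (fun y : ℝ => 2 / aP1 * y ^ (-(5 : ℝ)/8)) _ x :=
    (Real.hasDerivAt_rpow_const (Or.inl hx0.ne')).const_mul _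
  have key := hp.hasDerivWithinAt.mul
    ((hθ.cos.hasDerivWithinAt.mul hS).sub (hθ.sin.hasDerivWithinAt.mul hC))
  refine (key.congr_of_mem (fun y hy => KK_eq hF hy) hx).congr_deriv ?_
  rw [KK_eq hF hx, JJ_eq hF hx]
  have e1 : x ^ (-(5 : ℝ)/8 - 1) = x ^ (-(5 : ℝ)/8) / x := by
    rw [Real.rpow_sub_one hx0.ne']
  have e2 : x ^ (-(5 : ℝ)/8) * x ^ ((5 : ℝ)/4 - 1) = x ^ (-(3 : ℝ)/8) := by
    rw [← Real.rpow_add hx0]; norm_num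
  have e3 : 2 / aP1 * (bP1 * (5/4)) = 1 := by
    have := bP1_pos.ne'
    unfold aP1; field_simp; norm_num
  rw [e1, ← e2]
  have hs := Real.sin_sq_add_cos_sq (bP1 * x ^ ((5 : ℝ)/4))
  simp only [Pi.sub_apply, Pi.mul_apply]
  set c := Real.cos (bP1 * x ^ ((5 : ℝ)/4))
  set s := Real.sin (bP1 * x ^ ((5 : ℝ)/4))
  set p := x ^ (-(5 : ℝ)/8)
  set q := x ^ ((5 : ℝ)/4 - 1)
  linear_combination (-p*q*(c * Cint F x + s * Sint F x)) * e3


/-! ### Estimates for the operator and the nonlinearity -/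

/-- Absolute-value estimate of an oscillatory tail: `∫_x^∞ t^{3/8 - 12} dt = (8/85) x^{-85/8}`. -/
lemma tail_bound {s F : ℝ → ℝ} (hs : ∀ t, |s t| ≤ 1) {q : ℝ}
    (hF : ∀ t ∈ Ici LP1, |F t| ≤ q * t ^ (-(12 : ℝ))) {x : ℝ} (hx : x ∈ Ici LP1) :
    |∫ t in Ioi x, s t * (t ^ ((3 : ℝ)/8) * F t)| ≤ q * (8/85) * x ^ (-(85 : ℝ)/8) := by
  have hx0 := pos_of_mem hx
  have hi : IntegrableOn (fun t : ℝ => q * t ^ (-(93 : ℝ)/8)) (Ioi x) :=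
    (integrableOn_Ioi_rpow_of_lt (by norm_num) hx0).const_mul q
  have h := norm_integral_le_of_norm_le (f := fun t => s t * (t ^ ((3 : ℝ)/8) * F t)) hi (by
    refine (ae_restrict_iff' measurableSet_Ioi).2 (Filter.Eventually.of_forall fun t ht => ?_)
    have ht0 : 0 < t := hx0.trans ht
    rw [norm_mul, norm_mul, Real.norm_eq_abs, Real.norm_eq_abs, Real.norm_eq_abs,
      abs_of_pos (Real.rpow_pos_of_pos ht0 ((3 : ℝ)/8))]
    have e : t ^ (-(93 : ℝ)/8) = t ^ ((3 : ℝ)/8) * t ^ (-(12 : ℝ)) := by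
      rw [← Real.rpow_add ht0]; norm_num
    rw [e]
    have h3 := Real.rpow_pos_of_pos ht0 ((3 : ℝ)/8)
    calc |s t| * (t ^ ((3 : ℝ)/8) * |F t|) ≤ 1 * (t ^ ((3 : ℝ)/8) * |F t|) := by
          gcongr; exact hs t
      _ ≤ 1 * (t ^ ((3 : ℝ)/8) * (q * t ^ (-(12 : ℝ)))) := by
          gcongr; exact hF t (mem_Ici.2 (le_trans hx (le_of_lt ht)))
      _ = _ := by ring)
  rw [Real.norm_eq_abs] at h
  refine h.trans_eq ?_
  rw [integral_const_mul, integral_Ioi_rpow_of_lt (by norm_num) hx0]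
  norm_num
  ring

lemma JJ_bound {F : ℝ → ℝ} {q : ℝ}
    (hF : ∀ t ∈ Ici LP1, |F t| ≤ q * t ^ (-(12 : ℝ))) {x : ℝ} (hx : x ∈ Ici LP1) :
    |JJ F x| ≤ q * (8/85) * x ^ (-(85 : ℝ)/8) :=
  tail_bound (fun _ => Real.abs_cos_le_one _) hF hx

/-- The constant `0.042525` bounds `(2/a)·(8/85)`. -/
lemma KK_bound {F : ℝ → ℝ} {q : ℝ} (hq : 0 ≤ q)
    (hF : ∀ t ∈ Ici LP1, |F t| ≤ q * t ^ (-(12 : ℝ))) {x : ℝ} (hx : x ∈ Ici LP1) :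
    |KK F x| ≤ 0.042525 * q * x ^ (-(45 : ℝ)/4) := by
  have hx0 := pos_of_mem hx
  have h : |∫ t in Ioi x, Real.sin (bP1 * (t ^ ((5 : ℝ)/4) - x ^ ((5 : ℝ)/4))) *
      (t ^ ((3 : ℝ)/8) * F t)| ≤ q * (8/85) * x ^ (-(85 : ℝ)/8) :=
    tail_bound (fun _ => Real.abs_sin_le_one _) hF hx
  have e : x ^ (-(45 : ℝ)/4) = x ^ (-(5 : ℝ)/8) * x ^ (-(85 : ℝ)/8) := by
    rw [← Real.rpow_add hx0]; norm_num
  have ha : 2 / aP1 ≤ 0.45182 := by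
    rw [div_le_iff₀ aP1_pos]; have := aP1_gt; linarith
  have ha0 : 0 < 2 / aP1 := div_pos two_pos aP1_pos
  unfold KK
  rw [abs_mul, abs_mul, abs_of_pos ha0, abs_of_pos (Real.rpow_pos_of_pos hx0 _), e]
  have h1 := Real.rpow_pos_of_pos hx0 (-(5 : ℝ)/8)
  have h2 := Real.rpow_pos_of_pos hx0 (-(85 : ℝ)/8)
  calc _ ≤ 0.45182 * x ^ (-(5 : ℝ)/8) * (q * (8/85) * x ^ (-(85 : ℝ)/8)) := by gcongr
    _ = (0.45182 * (8/85)) * (q * (x ^ (-(5 : ℝ)/8) * x ^ (-(85 : ℝ)/8))) := by ring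
    _ ≤ 0.042525 * (q * (x ^ (-(5 : ℝ)/8) * x ^ (-(85 : ℝ)/8))) := by
        gcongr; norm_num
    _ = _ := by ring

lemma adm_of_bound {F : ℝ → ℝ} (hc : ContinuousOn F (Ici LP1)) {q r : ℝ} (hr : r < -11/8)
    (hF : ∀ t ∈ Ici LP1, |F t| ≤ q * t ^ r) : Adm F := by
  refine ⟨hc, ?_⟩
  have hi : IntegrableOn (fun t : ℝ => q * t ^ (3/8 + r)) (Ioi LP1) :=
    (integrableOn_Ioi_rpow_of_lt (by linarith) LP1_pos).const_mul q
  refine hi.mono' (((cont_w' hc).mono Ioi_subset_Ici_self).aestronglyMeasurable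
    measurableSet_Ioi) ?_
  refine (ae_restrict_iff' measurableSet_Ioi).2 (Filter.Eventually.of_forall fun t ht => ?_)
  have ht0 : 0 < t := LP1_pos.trans ht
  rw [norm_mul, Real.norm_eq_abs, Real.norm_eq_abs, abs_of_pos (Real.rpow_pos_of_pos ht0 _),
    Real.rpow_add ht0]
  calc _ ≤ t ^ ((3 : ℝ)/8) * (q * t ^ r) := by gcongr; exact hF t (mem_Ici.2 (le_of_lt ht))
    _ = _ := by ring

lemma y_le {t : ℝ} (ht : t ∈ Ici LP1) : t ^ (-(5 : ℝ)/2) ≤ 1/70 := by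
  have ht0 := pos_of_mem ht
  have h5 : (11/2 : ℝ) ≤ t := ht
  rw [show (-(5 : ℝ)/2) = -(5/2) by ring, Real.rpow_neg ht0.le, one_div]
  refine inv_anti₀ (by norm_num) ?_
  refine le_trans ?_ (Real.rpow_le_rpow (by norm_num) h5 (by norm_num))
  refine le_of_sq_le_sq ?_ (by positivity)
  rw [← Real.rpow_natCast ((11/2 : ℝ) ^ _), ← Real.rpow_mul (by norm_num)]
  norm_num

lemma sqrt6_gt : 2.449 < Real.sqrt 6 := by
  rw [Real.lt_sqrt (by norm_num)]; norm_num

lemma sqrt6_lt : Real.sqrt 6 < 2.45 := by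
  rw [Real.sqrt_lt' (by norm_num)]; norm_num

lemma rpow_five {t : ℝ} (ht : 0 < t) : t ^ (-(5 : ℝ)) = t ^ (-(5 : ℝ)/2) * t ^ (-(5 : ℝ)/2) := by
  rw [← Real.rpow_add ht]; norm_num

/-- The correction factors `1 - β x^{-5/2} + γ x^{-5}` lie in `[0,1]` for `x ≥ L`, because
`x^{-5/2} ≤ 1/70` there and the negative term dominates the positive one. -/
lemma bracket_mem {β γ y : ℝ} (hy0 : 0 < y) (hy : y ≤ 1/70) (hβ : β ≤ 1)
    (hγ0 : 0 ≤ γ) (hγ : γ ≤ 70 * β) :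
    0 ≤ 1 - β * y + γ * (y * y) ∧ 1 - β * y + γ * (y * y) ≤ 1 := by
  constructor
  · nlinarith [mul_nonneg hγ0 (mul_pos hy0 hy0).le]
  · nlinarith [mul_le_mul_of_nonneg_left hy hγ0]

/-- Rational bounds for coefficients with `√6` in the denominator. -/
lemma coef_bounds {p q : ℝ} (hp : 0 < p) (hq : 0 < q) :
    p / (q * 2.45) ≤ p / (q * Real.sqrt 6) ∧ p / (q * Real.sqrt 6) ≤ p / (q * 2.449) := by
  have h1 := sqrt6_gt
  have h2 := sqrt6_lt
  constructor
  · gcongr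
  · gcongr

/-- Local Lipschitz estimate for `RR`. The linear term contributes `25/64 = 0.390625`; the quadratic
one is of relative size `t^{-15/2} ≤ 70⁻³` and fits into the gap to `0.391`. -/
lemma RR_sub_bound {w₁ w₂ t D : ℝ} (ht : t ∈ Ici LP1)
    (h1 : |w₁| ≤ 8 * t ^ (-(10 : ℝ))) (h2 : |w₂| ≤ 8 * t ^ (-(10 : ℝ)))
    (hd : |w₁ - w₂| ≤ D * t ^ (-(10 : ℝ))) :
    |RR (fun _ => w₁) t - RR (fun _ => w₂) t| ≤ 0.391 * D * t ^ (-(12 : ℝ)) := by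
  have ht0 := pos_of_mem ht
  have hy := y_le ht
  have hy0 := Real.rpow_pos_of_pos ht0 (-(5 : ℝ)/2)
  have hb := bracket_mem (β := 49 / (25 * Real.sqrt 6)) (γ := 49/12) hy0 hy
    ((coef_bounds (by norm_num) (by norm_num)).2.trans (by norm_num)) (by norm_num)
    (by linarith [(coef_bounds (p := 49) (q := 25) (by norm_num) (by norm_num)).1])
  unfold RR
  rw [rpow_five ht0, Real.sqrt_mul (by norm_num)]
  have hr : Real.sqrt t * t ^ (-(10 : ℝ)) = (t ^ 2)⁻¹ * (t ^ (-(5 : ℝ)/2)) ^ 3 := by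
    rw [Real.sqrt_eq_rpow, ← Real.rpow_natCast t 2, ← Real.rpow_neg ht0.le,
      ← Real.rpow_natCast _ 3, ← Real.rpow_mul ht0.le, ← Real.rpow_add ht0, ← Real.rpow_add ht0]
    norm_num
  have e12 : t ^ (-(12 : ℝ)) = (t ^ 2)⁻¹ * t ^ (-(10 : ℝ)) := by
    rw [← Real.rpow_natCast t 2, ← Real.rpow_neg ht0.le, ← Real.rpow_add ht0]; norm_num
  rw [e12]
  have hp := Real.rpow_pos_of_pos ht0 (-(10 : ℝ))
  have hz : 0 < (t ^ 2)⁻¹ := by positivity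
  have hr0 := Real.sqrt_nonneg t
  set y := t ^ (-(5 : ℝ)/2)
  set p := t ^ (-(10 : ℝ))
  set B := 1 - 49 / (25 * Real.sqrt 6) * y + 49 / 12 * (y * y)
  set r := Real.sqrt t
  have e : 25 / (64 * t ^ 2) * B * w₁ + Real.sqrt 6 * r * w₁ ^ 2 -
      (25 / (64 * t ^ 2) * B * w₂ + Real.sqrt 6 * r * w₂ ^ 2) =
      (w₁ - w₂) * (25 / 64 * (t ^ 2)⁻¹ * B + Real.sqrt 6 * r * (w₁ + w₂)) := by
    field_simp; ring
  rw [e, abs_mul]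
  have hs := sqrt6_lt
  have hy3 : y ^ 3 ≤ (1/70) ^ 3 := by gcongr
  have hsum : |w₁ + w₂| ≤ 16 * p := (abs_add_le _ _).trans (by linarith)
  -- `√t · t^{-10} = t^{-2} · y³` absorbs the quadratic term.
  have hk : |25 / 64 * (t ^ 2)⁻¹ * B + Real.sqrt 6 * r * (w₁ + w₂)| ≤ 0.391 * (t ^ 2)⁻¹ := by
    calc _ ≤ |25 / 64 * (t ^ 2)⁻¹ * B| + |Real.sqrt 6 * r * (w₁ + w₂)| := abs_add_le _ _
      _ = 25 / 64 * (t ^ 2)⁻¹ * B + Real.sqrt 6 * r * |w₁ + w₂| := by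
          rw [abs_of_nonneg (mul_nonneg (by positivity) hb.1), abs_mul _ (w₁ + w₂),
            abs_of_nonneg (by positivity : 0 ≤ Real.sqrt 6 * r)]
      _ ≤ 25 / 64 * (t ^ 2)⁻¹ * 1 + Real.sqrt 6 * r * (16 * p) := by
          gcongr
          exact hb.2
      _ = (t ^ 2)⁻¹ * (25 / 64 + 16 * Real.sqrt 6 * y ^ 3) := by
          linear_combination 16 * Real.sqrt 6 * hr
      _ ≤ (t ^ 2)⁻¹ * (25 / 64 + 16 * 2.45 * (1/70) ^ 3) := by gcongr
      _ ≤ _ := by rw [mul_comm]; gcongr; norm_num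
  calc _ ≤ (D * p) * (0.391 * (t ^ 2)⁻¹) := by gcongr; exact (abs_nonneg _).trans hd
    _ = _ := by ring

/-! ### The source `N₀` and the bound on `w₀` -/

/-- Leading coefficient of `-N₀`. -/
def cN : ℝ := 4412401 / (98304 * Real.sqrt 6)
/-- Coefficient of `-x^{-5/2}` in the bracket of `N₀`. -/
def βN : ℝ := 1225 / (90049 * Real.sqrt 6)
/-- Coefficient of `x^{-5}` in the bracket of `N₀`. -/
def γN : ℝ := 30625 / 2161176

lemma cN_pos : 0 < cN := by unfold cN; positivity
lemma βN_bounds : 0.005 ≤ βN ∧ βN ≤ 0.006 := by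
  have := coef_bounds (p := 1225) (q := 90049) (by norm_num) (by norm_num)
  unfold βN
  constructor
  · refine le_trans ?_ this.1; norm_num
  · refine le_trans this.2 ?_; norm_num

/-- `hN t = -t^{1/8} N₀(t)`, the amplitude left after splitting off the derivative
`(5b/4) t^{1/4}` of the phase from `t^{3/8} N₀(t)`. -/
def hN (t : ℝ) : ℝ :=
  cN * (t ^ (-(75 : ℝ)/8) - βN * t ^ (-(95 : ℝ)/8) + γN * t ^ (-(115 : ℝ)/8))

lemma N₀_eq {t : ℝ} (ht : 0 < t) : t ^ ((3 : ℝ)/8) * N₀ t = -(t ^ ((1 : ℝ)/4) * hN t) := by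
  unfold N₀ hN cN βN γN
  have e2 : t ^ (-(75 : ℝ)/8) = t ^ (-(19 : ℝ)/2) * t ^ ((1 : ℝ)/8) := by
    rw [← Real.rpow_add ht]; norm_num
  have e3 : t ^ (-(95 : ℝ)/8) = t ^ (-(19 : ℝ)/2) * t ^ ((1 : ℝ)/8) * t ^ (-(5 : ℝ)/2) := by
    rw [← Real.rpow_add ht, ← Real.rpow_add ht]; norm_num
  have e4 : t ^ (-(115 : ℝ)/8) = t ^ (-(19 : ℝ)/2) * t ^ ((1 : ℝ)/8) * t ^ (-(5 : ℝ)) := by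
    rw [← Real.rpow_add ht, ← Real.rpow_add ht]; norm_num
  have e5 : t ^ ((3 : ℝ)/8) = t ^ ((1 : ℝ)/4) * t ^ ((1 : ℝ)/8) := by
    rw [← Real.rpow_add ht]; norm_num
  rw [e2, e3, e4, e5]; ring

lemma N₀_bound {t : ℝ} (ht : t ∈ Ici LP1) : |N₀ t| ≤ cN * t ^ (-(19 : ℝ)/2) := by
  have ht0 := pos_of_mem ht
  have hb := bracket_mem (β := βN) (γ := γN) (Real.rpow_pos_of_pos ht0 (-(5 : ℝ)/2)) (y_le ht)
    (by linarith [βN_bounds.2]) (by norm_num [γN])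
    (by have := βN_bounds.1; norm_num [γN]; linarith)
  have e : N₀ t = -(cN * t ^ (-(19 : ℝ)/2) * (1 - βN * t ^ (-(5 : ℝ)/2) +
      γN * (t ^ (-(5 : ℝ)/2) * t ^ (-(5 : ℝ)/2)))) := by
    unfold N₀ cN βN γN; rw [rpow_five ht0]; ring
  have hc : 0 ≤ cN * t ^ (-(19 : ℝ)/2) := mul_nonneg cN_pos.le (by positivity)
  rw [e, abs_neg, abs_mul, abs_of_nonneg hc, abs_of_nonneg hb.1]
  exact mul_le_of_le_one_right hc hb.2

lemma N₀_cont : ContinuousOn N₀ (Ici LP1) := by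
  unfold N₀
  intro x hx
  have := (pos_of_mem hx).ne'
  have h : ∀ p : ℝ, ContinuousAt (fun t : ℝ => t ^ p) x := fun p =>
    Real.continuousAt_rpow_const _ _ (Or.inl this)
  exact ((continuousAt_const.mul (h _)).mul
    ((continuousAt_const.sub (continuousAt_const.mul (h _))).add
      (continuousAt_const.mul (h _)))).continuousWithinAt

lemma N₀_adm : Adm N₀ := adm_of_bound N₀_cont (by norm_num) fun _ ht => N₀_bound ht

lemma hN_bound {t : ℝ} (ht : t ∈ Ici LP1) : 0 ≤ hN t ∧ hN t ≤ cN * t ^ (-(75 : ℝ)/8) := by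
  have ht0 := pos_of_mem ht
  have hb := bracket_mem (β := βN) (γ := γN) (Real.rpow_pos_of_pos ht0 (-(5 : ℝ)/2)) (y_le ht)
    (by linarith [βN_bounds.2]) (by norm_num [γN])
    (by have := βN_bounds.1; norm_num [γN]; linarith)
  have e : hN t = cN * t ^ (-(75 : ℝ)/8) * (1 - βN * t ^ (-(5 : ℝ)/2) +
      γN * (t ^ (-(5 : ℝ)/2) * t ^ (-(5 : ℝ)/2))) := by
    have e3 : t ^ (-(95 : ℝ)/8) = t ^ (-(75 : ℝ)/8) * t ^ (-(5 : ℝ)/2) := by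
      rw [← Real.rpow_add ht0]; norm_num
    have e4 : t ^ (-(115 : ℝ)/8) = t ^ (-(75 : ℝ)/8) * t ^ (-(5 : ℝ)) := by
      rw [← Real.rpow_add ht0]; norm_num
    unfold hN; rw [e3, e4, rpow_five ht0]; ring
  have hc : 0 ≤ cN * t ^ (-(75 : ℝ)/8) := mul_nonneg cN_pos.le (by positivity)
  rw [e]
  exact ⟨mul_nonneg hc hb.1, mul_le_of_le_one_right hc hb.2⟩

/-- The derivative of `hN`. -/
def hN' (t : ℝ) : ℝ :=
  cN * (-(75 : ℝ)/8 * t ^ (-(83 : ℝ)/8) - βN * (-(95 : ℝ)/8 * t ^ (-(103 : ℝ)/8)) +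
    γN * (-(115 : ℝ)/8 * t ^ (-(123 : ℝ)/8)))

lemma hN_deriv {t : ℝ} (ht : 0 < t) : HasDerivAt hN (hN' t) t := by
  have h : ∀ p : ℝ, HasDerivAt (fun t : ℝ => t ^ p) (p * t ^ (p - 1)) t := fun p =>
    Real.hasDerivAt_rpow_const (Or.inl ht.ne')
  refine HasDerivAt.congr_deriv (f := hN) ((((h (-(75 : ℝ)/8)).sub
    ((h (-(95 : ℝ)/8)).const_mul βN)).add ((h (-(115 : ℝ)/8)).const_mul γN)).const_mul cN) ?_
  unfold hN'; norm_num

lemma hN'_bound {t : ℝ} (ht : t ∈ Ici LP1) : |hN' t| ≤ cN * (75/8) * t ^ (-(83 : ℝ)/8) := by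
  have ht0 := pos_of_mem ht
  have hy := y_le ht
  have hy0 := Real.rpow_pos_of_pos ht0 (-(5 : ℝ)/2)
  have hβ := βN_bounds
  have hb := bracket_mem (β := βN * (95/75)) (γ := γN * (115/75)) hy0 hy
    (by linarith) (by norm_num [γN])
    (by norm_num [γN]; linarith)
  have e : hN' t = -(cN * (75/8) * t ^ (-(83 : ℝ)/8) * (1 - βN * (95/75) * t ^ (-(5 : ℝ)/2) +
      γN * (115/75) * (t ^ (-(5 : ℝ)/2) * t ^ (-(5 : ℝ)/2)))) := by
    have e3 : t ^ (-(103 : ℝ)/8) = t ^ (-(83 : ℝ)/8) * t ^ (-(5 : ℝ)/2) := by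
      rw [← Real.rpow_add ht0]; norm_num
    have e4 : t ^ (-(123 : ℝ)/8) = t ^ (-(83 : ℝ)/8) * t ^ (-(5 : ℝ)) := by
      rw [← Real.rpow_add ht0]; norm_num
    unfold hN'; rw [e3, e4, rpow_five ht0]; ring
  have hc : 0 ≤ cN * (75/8) * t ^ (-(83 : ℝ)/8) :=
    mul_nonneg (mul_nonneg cN_pos.le (by norm_num)) (by positivity)
  rw [e, abs_neg, abs_mul, abs_of_nonneg hc, abs_of_nonneg hb.1]
  exact mul_le_of_le_one_right hc hb.2


/-- Integration by parts in `KK N₀`. It gains the factor `x^{-5/4}` without which `w₀` could not be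
seen to decay like `x^{-10}`. -/
lemma KK_N₀_eq {x : ℝ} (hx : x ∈ Ici LP1) :
    KK N₀ x = -(8 / (5 * (aP1 * bP1))) * x ^ (-(5 : ℝ)/8) *
      (hN x + ∫ t in Ioi x,
        Real.cos (bP1 * (t ^ ((5 : ℝ)/4) - x ^ ((5 : ℝ)/4))) * hN' t) := by
  have hx0 := pos_of_mem hx
  have hb := bP1_pos
  set θ : ℝ → ℝ := fun t => bP1 * (t ^ ((5 : ℝ)/4) - x ^ ((5 : ℝ)/4)) with hθ
  have hmem : ∀ t ∈ Ioi x, t ∈ Ici LP1 := fun t ht => mem_Ici.2 (le_trans hx (le_of_lt ht))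
  have hθc : Continuous θ := continuous_const.mul (cont_phase.sub continuous_const)
  have hθd : ∀ {t : ℝ}, 0 < t → HasDerivAt θ (5 / 4 * bP1 * t ^ ((1 : ℝ)/4)) t := fun {t} ht => by
    refine (((Real.hasDerivAt_rpow_const (p := (5 : ℝ)/4) (Or.inl ht.ne')).sub_const
      (x ^ ((5 : ℝ)/4))).const_mul bP1).congr_deriv ?_
    norm_num; ring
  have hi1 : IntegrableOn (fun t => Real.cos (θ t) * hN' t) (Ioi x) := by
    have : IntegrableOn hN' (Ioi x) := by
      have hi : ∀ p : ℝ, p < -1 → IntegrableOn (fun t : ℝ => t ^ p) (Ioi x) := fun p hp =>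
        integrableOn_Ioi_rpow_of_lt hp hx0
      exact ((((hi _ (by norm_num)).const_mul _).sub
        (((hi _ (by norm_num)).const_mul _).const_mul _)).add
        (((hi _ (by norm_num)).const_mul _).const_mul _)).const_mul _
    exact integrable_bdd this (Real.continuous_cos.comp hθc) fun _ => Real.abs_cos_le_one _
  have hi2 : IntegrableOn (fun t => Real.sin (θ t) * (t ^ ((3 : ℝ)/8) * N₀ t)) (Ioi x) :=
    integrable_bdd (N₀_adm.integrableOn hx) (Real.continuous_sin.comp hθc)
      fun _ => Real.abs_sin_le_one _
  have hd : ∀ t ∈ Ici x, HasDerivAt (fun t => Real.cos (θ t) * hN t)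
      (Real.cos (θ t) * hN' t + 5 / 4 * bP1 * (Real.sin (θ t) * (t ^ ((3 : ℝ)/8) * N₀ t))) t := by
    intro t ht
    have ht0 : 0 < t := hx0.trans_le ht
    refine ((hθd ht0).cos.mul (hN_deriv ht0)).congr_deriv ?_
    rw [N₀_eq ht0]; ring
  have hlim : Filter.Tendsto (fun t => Real.cos (θ t) * hN t) Filter.atTop (nhds 0) := by
    have h0 : Filter.Tendsto (fun t : ℝ => cN * t ^ (-(75/8 : ℝ))) Filter.atTop (nhds 0) := by
      simpa using (tendsto_rpow_neg_atTop (y := (75/8 : ℝ)) (by norm_num)).const_mul cN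
    refine squeeze_zero_norm' ?_ h0
    filter_upwards [Filter.eventually_ge_atTop LP1] with t ht
    have := hN_bound (mem_Ici.2 ht)
    rw [norm_mul, Real.norm_eq_abs, Real.norm_eq_abs, abs_of_nonneg this.1]
    calc _ ≤ 1 * hN t := by gcongr; exacts [this.1, Real.abs_cos_le_one _]
      _ ≤ _ := by rw [one_mul]; refine this.2.trans_eq ?_; norm_num
  have key := integral_Ioi_of_hasDerivAt_of_tendsto
    (hd x self_mem_Ici).continuousAt.continuousWithinAt
    (fun t ht => hd t (mem_Ici.2 (le_of_lt ht))) (hi1.add (hi2.const_mul _)) hlim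
  rw [integral_add hi1 (hi2.const_mul _), integral_const_mul] at key
  have hθx : Real.cos (θ x) = 1 := by simp [hθ]
  rw [hθx] at key
  have hK : KK N₀ x = 2 / aP1 * x ^ (-(5 : ℝ)/8) *
    ∫ t in Ioi x, Real.sin (θ t) * (t ^ ((3 : ℝ)/8) * N₀ t) := rfl
  rw [hK]
  set A := ∫ t in Ioi x, Real.sin (θ t) * (t ^ ((3 : ℝ)/8) * N₀ t)
  set B := ∫ t in Ioi x, Real.cos (θ t) * hN' t
  have hA : A = -(4 / (5 * bP1)) * (hN x + B) := by
    field_simp; linarith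
  have := aP1_pos
  rw [hA]; field_simp; ring

lemma w₀r_eq {x : ℝ} (hx : x ∈ Ici LP1) : w₀r x = KK N₀ x := by
  have := green_eq N₀_adm hx
  unfold w₀r w₀c
  rw [this, Complex.ofReal_re]

/-- Both `hN x` and `∫_x^∞ |hN'|` are at most `cN x^{-75/8}`, so `|w₀| x^{10} ≤ 2 cN/√24 < 7.481`. -/
lemma w₀_bound {x : ℝ} (hx : x ∈ Ici LP1) : |w₀r x| ≤ 7.481 * x ^ (-(10 : ℝ)) := by
  have hx0 := pos_of_mem hx
  rw [w₀r_eq hx, KK_N₀_eq hx, aP1_mul_bP1]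
  have hi : IntegrableOn (fun t : ℝ => cN * (75/8) * t ^ (-(83 : ℝ)/8)) (Ioi x) :=
    (integrableOn_Ioi_rpow_of_lt (by norm_num) hx0).const_mul _
  have h := norm_integral_le_of_norm_le (f := fun t =>
      Real.cos (bP1 * (t ^ ((5 : ℝ)/4) - x ^ ((5 : ℝ)/4))) * hN' t) hi (by
    refine (ae_restrict_iff' measurableSet_Ioi).2 (Filter.Eventually.of_forall fun t ht => ?_)
    have hb := hN'_bound (mem_Ici.2 (le_trans hx (le_of_lt ht)))
    rw [norm_mul, Real.norm_eq_abs, Real.norm_eq_abs]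
    calc _ ≤ 1 * |hN' t| := by gcongr; exact Real.abs_cos_le_one _
      _ ≤ _ := by rw [one_mul]; exact hb)
  rw [integral_const_mul, integral_Ioi_rpow_of_lt (by norm_num) hx0, Real.norm_eq_abs] at h
  have e : cN * (75/8) * (-x ^ (-(83 : ℝ)/8 + 1) / (-(83 : ℝ)/8 + 1)) =
      cN * x ^ (-(75 : ℝ)/8) := by norm_num; ring
  rw [e] at h
  have hh := hN_bound hx
  have e10 : x ^ (-(10 : ℝ)) = x ^ (-(5 : ℝ)/8) * x ^ (-(75 : ℝ)/8) := by
    rw [← Real.rpow_add hx0]; norm_num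
  have h24 : Real.sqrt 24 = 2 * Real.sqrt 6 := by
    rw [show (24 : ℝ) = 2 ^ 2 * 6 by norm_num, Real.sqrt_mul (by norm_num),
      Real.sqrt_sq (by norm_num)]
  have hs6 : Real.sqrt 6 * Real.sqrt 6 = 6 := Real.mul_self_sqrt (by norm_num)
  have hs0 : 0 < Real.sqrt 6 := by positivity
  have hp := Real.rpow_pos_of_pos hx0 (-(5 : ℝ)/8)
  have hq := Real.rpow_pos_of_pos hx0 (-(75 : ℝ)/8)
  rw [h24, e10, neg_mul, neg_mul, abs_neg, abs_mul, abs_of_pos (by positivity)]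
  have hc : 8 / (5 * (8 / 5 * (2 * Real.sqrt 6))) * (2 * cN) ≤ 7.481 := by
    have : 8 / (5 * (8 / 5 * (2 * Real.sqrt 6))) * (2 * cN) =
        4412401 / (98304 * (Real.sqrt 6 * Real.sqrt 6)) := by
      unfold cN; field_simp
    rw [this, hs6]; norm_num
  calc _ ≤ 8 / (5 * (8 / 5 * (2 * Real.sqrt 6))) * x ^ (-(5 : ℝ)/8) *
        (cN * x ^ (-(75 : ℝ)/8) + cN * x ^ (-(75 : ℝ)/8)) := by
        gcongr
        refine (abs_add_le _ _).trans (add_le_add ?_ h)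
        rw [abs_of_nonneg hh.1]; exact hh.2
    _ = (8 / (5 * (8 / 5 * (2 * Real.sqrt 6))) * (2 * cN)) *
        (x ^ (-(5 : ℝ)/8) * x ^ (-(75 : ℝ)/8)) := by ring
    _ ≤ _ := by gcongr

lemma rpow_neg_ten {x : ℝ} (hx : 0 < x) : x ^ (-(10 : ℝ)) = (x ^ 10)⁻¹ := by
  rw [Real.rpow_neg hx.le, ← Real.rpow_natCast x 10]; norm_num

lemma weighted_le_iff {x A B : ℝ} (hx : x ∈ Ici LP1) :
    x ^ 10 * A ≤ B ↔ A ≤ B * x ^ (-(10 : ℝ)) := by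
  have hx0 := pos_of_mem hx
  rw [rpow_neg_ten hx0, ← div_eq_mul_inv, le_div_iff₀ (by positivity), mul_comm]

/-- The supremum defining `W₀norm` is over a bounded set, so it is a genuine norm of `w₀`. -/
lemma W₀norm_bound {x : ℝ} (hx : x ∈ Ici LP1) : |w₀r x| ≤ W₀norm * x ^ (-(10 : ℝ)) := by
  rw [← weighted_le_iff hx]
  refine le_ciSup (f := fun x : Ici LP1 => ((x : ℝ)) ^ (10 : ℕ) * |w₀r x|) ⟨7.481, ?_⟩ ⟨x, hx⟩
  rintro _ ⟨y, rfl⟩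
  exact (weighted_le_iff y.2).2 (w₀_bound y.2)

instance : Nonempty (Ici LP1) := ⟨⟨LP1, self_mem_Ici⟩⟩

lemma W₀norm_le : W₀norm ≤ 7.481 :=
  ciSup_le fun y => (weighted_le_iff y.2).2 (w₀_bound y.2)

lemma W₀norm_nonneg : 0 ≤ W₀norm :=
  Real.iSup_nonneg fun y => by have := pos_of_mem y.2; positivity

lemma w₀r_deriv {x : ℝ} (hx : x ∈ Ici LP1) : ∃ d, HasDerivWithinAt w₀r d (Ici LP1) x :=
  ⟨_, (KK_deriv N₀_adm hx).congr_of_mem (fun _ hy => w₀r_eq hy) hx⟩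

/-! ### The fixed-point map on the ball -/

/-- The closed ball of radius `2·10⁻³ ‖w₀‖₁₀` about `w₀`, as a predicate on functions of which only
the values on `[L,∞)` matter. -/
def InBall (w : ℝ → ℝ) : Prop :=
  ContinuousOn w (Ici LP1) ∧ ∀ x ∈ Ici LP1, x ^ (10 : ℕ) * |w x - w₀r x| ≤ 2e-3 * W₀norm

lemma InBall.bound {w : ℝ → ℝ} (hw : InBall w) {x : ℝ} (hx : x ∈ Ici LP1) :
    |w x| ≤ 1.002 * W₀norm * x ^ (-(10 : ℝ)) := by
  have h1 := (weighted_le_iff hx).1 (hw.2 x hx)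
  have h2 := W₀norm_bound hx
  have h3 : |w x| ≤ |w x - w₀r x| + |w₀r x| := by
    simpa using abs_add_le (w x - w₀r x) (w₀r x)
  linarith

/-- A numerical size bound on the ball, from `1.002·7.481 ≤ 8`. -/
lemma InBall.bound8 {w : ℝ → ℝ} (hw : InBall w) {x : ℝ} (hx : x ∈ Ici LP1) :
    |w x| ≤ 8 * x ^ (-(10 : ℝ)) := by
  have hx0 := pos_of_mem hx
  refine (hw.bound hx).trans ?_
  gcongr
  linarith [W₀norm_le]

lemma RR_cont {w : ℝ → ℝ} (hw : ContinuousOn w (Ici LP1)) : ContinuousOn (RR w) (Ici LP1) := by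
  have h : ∀ p : ℝ, ContinuousOn (fun t : ℝ => t ^ p) (Ici LP1) := fun p x hx =>
    (Real.continuousAt_rpow_const _ _ (Or.inl (pos_of_mem hx).ne')).continuousWithinAt
  have h2 : ContinuousOn (fun t : ℝ => 25 / (64 * t ^ 2)) (Ici LP1) :=
    continuousOn_const.div (by fun_prop) fun x hx => by have := pos_of_mem hx; positivity
  exact ((h2.mul ((continuousOn_const.sub (continuousOn_const.mul (h _))).add
    (continuousOn_const.mul (h _)))).mul hw).add
    ((Real.continuous_sqrt.comp (continuous_const.mul continuous_id)).continuousOn.mul (hw.pow 2))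

lemma InBall.RR_bound {w : ℝ → ℝ} (hw : InBall w) {x : ℝ} (hx : x ∈ Ici LP1) :
    |RR w x| ≤ 0.391 * (1.002 * W₀norm) * x ^ (-(12 : ℝ)) := by
  have hx0 := pos_of_mem hx
  have := RR_sub_bound (w₂ := 0) hx (hw.bound8 hx) (by rw [abs_zero]; positivity)
    (by simpa using hw.bound hx)
  have h0 : RR (fun _ => 0) x = 0 := by simp [RR]
  rw [h0, sub_zero] at this
  exact this

lemma InBall.adm {w : ℝ → ℝ} (hw : InBall w) : Adm (RR w) :=
  adm_of_bound (RR_cont hw.1) (by norm_num) fun _ hx => hw.RR_bound hx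

lemma Nfun_eq (w : ℝ → ℝ) : Nfun w = fun t => N₀ t - RR w t := by
  ext t; unfold Nfun RR; ring

lemma InBall.calN_eq {w : ℝ → ℝ} (hw : InBall w) {x : ℝ} (hx : x ∈ Ici LP1) :
    calN w x = ((w₀r x - KK (RR w) x : ℝ) : ℂ) := by
  unfold calN
  rw [Nfun_eq, w₀r_eq hx, ← KK_sub N₀_adm hw.adm hx]
  exact green_eq (N₀_adm.sub hw.adm) hx

lemma InBall.KK_bound {w : ℝ → ℝ} (hw : InBall w) {x : ℝ} (hx : x ∈ Ici LP1) :
    |KK (RR w) x| ≤ 0.0167 * W₀norm * x ^ (-(45 : ℝ)/4) := by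
  have hx0 := pos_of_mem hx
  have hW := W₀norm_nonneg
  refine (_root_.KK_bound (by positivity) (fun _ h => hw.RR_bound h) hx).trans ?_
  rw [← mul_assoc, ← mul_assoc]
  gcongr
  norm_num

/-- The gain `x^{-5/4} ≤ L^{-5/4} < 0.1188`; it makes `𝒩` preserve the ball,
as `0.0167·0.1188 < 2·10⁻³`. -/
lemma rpow_54 {x : ℝ} (hx : x ∈ Ici LP1) :
    x ^ (-(45 : ℝ)/4) ≤ 0.1188 * x ^ (-(10 : ℝ)) := by
  have hx0 := pos_of_mem hx
  have h5 : (11/2 : ℝ) ≤ x := hx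
  have e : x ^ (-(45 : ℝ)/4) = (x ^ ((5 : ℝ)/4))⁻¹ * x ^ (-(10 : ℝ)) := by
    rw [← Real.rpow_neg hx0.le, ← Real.rpow_add hx0]; norm_num
  rw [e]
  gcongr
  refine inv_le_of_inv_le₀ (by norm_num) ?_
  refine le_trans ?_ (Real.rpow_le_rpow (by norm_num) h5 (by norm_num))
  refine (pow_le_pow_iff_left₀ (by norm_num) (by positivity) (n := 4) (by norm_num)).1 ?_
  rw [← Real.rpow_natCast ((11/2 : ℝ) ^ _), ← Real.rpow_mul (by norm_num)]
  norm_num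

/-- `𝒩` contracts the weighted norm on the ball by a factor `1/2`
(the true factor is about `1/500`). -/
lemma KK_diff {w₁ w₂ : ℝ → ℝ} (h₁ : InBall w₁) (h₂ : InBall w₂) {D : ℝ} (hD : 0 ≤ D)
    (h : ∀ x ∈ Ici LP1, x ^ 10 * |w₁ x - w₂ x| ≤ D) {x : ℝ} (hx : x ∈ Ici LP1) :
    x ^ 10 * |(w₀r x - KK (RR w₁) x) - (w₀r x - KK (RR w₂) x)| ≤ 1 / 2 * D := by
  have hx0 := pos_of_mem hx
  rw [weighted_le_iff hx, abs_sub_comm, sub_sub_sub_cancel_left,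
    ← KK_sub h₁.adm h₂.adm hx]
  have hb := KK_bound (F := fun t => RR w₁ t - RR w₂ t) (q := 0.391 * D) (by positivity)
    (fun t ht => RR_sub_bound ht (h₁.bound8 ht) (h₂.bound8 ht)
      ((weighted_le_iff ht).1 (h t ht))) hx
  have hp := rpow_54 hx
  calc _ ≤ 0.042525 * (0.391 * D) * (0.1188 * x ^ (-(10 : ℝ))) := hb.trans (by gcongr)
    _ = (0.042525 * 0.391 * 0.1188) * D * x ^ (-(10 : ℝ)) := by ring
    _ ≤ _ := by gcongr; norm_num

/-- `𝒩` maps the ball to itself. -/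
lemma InBall.step {w v : ℝ → ℝ} (hw : InBall w)
    (hv : ∀ x ∈ Ici LP1, v x = w₀r x - KK (RR w) x) : InBall v := by
  constructor
  · refine ContinuousOn.congr (fun x hx => ?_) hv
    obtain ⟨d, hd⟩ := w₀r_deriv hx
    exact hd.continuousWithinAt.sub (KK_deriv hw.adm hx).continuousWithinAt
  · intro x hx
    rw [weighted_le_iff hx, hv x hx, sub_sub_cancel_left, abs_neg]
    have := W₀norm_nonneg
    have hx0 := pos_of_mem hx
    calc _ ≤ 0.0167 * W₀norm * (0.1188 * x ^ (-(10 : ℝ))) :=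
          (hw.KK_bound hx).trans (by gcongr; exact rpow_54 hx)
      _ = (0.0167 * 0.1188) * W₀norm * x ^ (-(10 : ℝ)) := by ring
      _ ≤ _ := by gcongr; norm_num

lemma w₀_inBall : InBall w₀r := by
  refine ⟨fun x hx => ?_, fun x hx => ?_⟩
  · obtain ⟨d, hd⟩ := w₀r_deriv hx
    exact hd.continuousWithinAt
  · rw [sub_self, abs_zero, mul_zero]
    exact mul_nonneg (by norm_num) W₀norm_nonneg

/-- Two fixed points in the ball are at weighted distance at most `16/2^n` for every `n`. -/
lemma uniq {w v : ℝ → ℝ} (hw : InBall w) (hv : InBall v)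
    (fw : ∀ x ∈ Ici LP1, w x = w₀r x - KK (RR w) x)
    (fv : ∀ x ∈ Ici LP1, v x = w₀r x - KK (RR v) x) : EqOn v w (Ici LP1) := by
  have key : ∀ n : ℕ, ∀ x ∈ Ici LP1, x ^ 10 * |v x - w x| ≤ (1/2) ^ n * 16 := by
    intro n
    induction n with
    | zero =>
      intro x hx
      rw [weighted_le_iff hx]
      have h1 := hw.bound8 hx
      have h2 := hv.bound8 hx
      have h3 := abs_sub (v x) (w x)
      rw [pow_zero, one_mul]
      linarith
    | succ n ih =>
      intro x hx
      rw [fw x hx, fv x hx, pow_succ' (1 / 2 : ℝ) n, mul_assoc (1 / 2 : ℝ)]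
      exact KK_diff hv hw (by positivity) ih hx
  intro x hx
  have hx0 := pos_of_mem hx
  have hlim : Filter.Tendsto (fun n : ℕ => ((1:ℝ)/2) ^ n * 16) Filter.atTop (nhds 0) := by
    simpa using (tendsto_pow_atTop_nhds_zero_of_lt_one (r := (1:ℝ)/2) (by norm_num)
      (by norm_num)).mul_const 16
  have h0 : x ^ 10 * |v x - w x| ≤ 0 := ge_of_tendsto' hlim fun n => key n x hx
  have : |v x - w x| ≤ 0 := by
    by_contra! h
    have : 0 < x ^ 10 * |v x - w x| := by positivity
    linarith
  exact sub_eq_zero.1 (abs_nonpos_iff.1 this)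


/-! ### Existence and the derivative estimate -/

open scoped BoundedContinuousFunction

/-- The function `w` on `[L,∞)` with `x^{10} w(x) = g(x)`. Together with `weight` this identifies the
space `𝒮` with the bounded continuous functions on `[L,∞)`, isometrically. Below `L` the value of
`g` at `L` is used; this is irrelevant. -/
def unweight (g : Ici LP1 →ᵇ ℝ) (t : ℝ) : ℝ := g ⟨max LP1 t, mem_Ici.2 (le_max_left _ _)⟩ * (t ^ 10)⁻¹

lemma unweight_cont (g : Ici LP1 →ᵇ ℝ) : ContinuousOn (unweight g) (Ici LP1) := by
  refine ContinuousOn.mul (Continuous.continuousOn ?_) (ContinuousOn.inv₀ (by fun_prop) ?_)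
  · exact g.continuous.comp (by fun_prop)
  · intro x hx; have := pos_of_mem hx; positivity

lemma weight_unweight (g : Ici LP1 →ᵇ ℝ) (x : Ici LP1) :
    (x : ℝ) ^ 10 * unweight g x = g x := by
  have := pos_of_mem x.2
  have h : (⟨max LP1 x, mem_Ici.2 (le_max_left _ _)⟩ : Ici LP1) = x := Subtype.ext (max_eq_right x.2)
  unfold unweight
  rw [h]; field_simp

/-- The bounded continuous function `x ↦ x^{10} w(x)` of a `w` in the ball. -/
def weight {w : ℝ → ℝ} (hw : InBall w) : Ici LP1 →ᵇ ℝ :=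
  BoundedContinuousFunction.ofNormedAddCommGroup (fun x => (x : ℝ) ^ 10 * w x)
    ((by fun_prop : Continuous fun x : Ici LP1 => (x : ℝ) ^ 10).mul hw.1.domRestrict) 8 fun x => by
      have := pos_of_mem x.2
      rw [norm_mul, Real.norm_of_nonneg (by positivity), Real.norm_eq_abs, weighted_le_iff x.2]
      exact hw.bound8 x.2

lemma dist_weight {x A B : ℝ} (hx : x ∈ Ici LP1) :
    dist (x ^ 10 * A) (x ^ 10 * B) = x ^ 10 * |A - B| := by
  have := pos_of_mem hx
  rw [Real.dist_eq, ← mul_sub, abs_mul, abs_of_nonneg (by positivity)]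

lemma mem_ball_iff (g : Ici LP1 →ᵇ ℝ) :
    g ∈ Metric.closedBall (weight w₀_inBall) (2e-3 * W₀norm) ↔ InBall (unweight g) := by
  rw [Metric.mem_closedBall, BoundedContinuousFunction.dist_le
    (mul_nonneg (by norm_num) W₀norm_nonneg)]
  have e : ∀ x : Ici LP1, dist (g x) (weight w₀_inBall x) =
      (x : ℝ) ^ 10 * |unweight g x - w₀r x| := fun x => by
    rw [← weight_unweight g x]; exact dist_weight x.2
  simp only [e]
  exact ⟨fun h => ⟨unweight_cont g, fun x hx => h ⟨x, hx⟩⟩, fun h x => h.2 x x.2⟩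

/-- Banach's theorem on the closed ball of bounded continuous functions on `[L,∞)`. -/
lemma exists_fixed : ∃ w, InBall w ∧ ∀ x ∈ Ici LP1, w x = w₀r x - KK (RR w) x := by
  set s := Metric.closedBall (weight w₀_inBall) (2e-3 * W₀norm)
  have hΦ : ∀ g : s, ∃ g' : s, ∀ x : Ici LP1,
      g'.1 x = (x : ℝ) ^ 10 * (w₀r x - KK (RR (unweight g.1)) x) := fun g => by
    have hg := (mem_ball_iff g.1).1 g.2
    have hv : InBall (fun x => w₀r x - KK (RR (unweight g.1)) x) := hg.step fun _ _ => rfl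
    refine ⟨⟨weight hv, ?_⟩, fun x => rfl⟩
    refine (BoundedContinuousFunction.dist_le (mul_nonneg (by norm_num) W₀norm_nonneg)).2
      fun x => ?_
    exact (dist_weight x.2).trans_le (hv.2 x x.2)
  choose Φ hΦ using hΦ
  have hcon : ContractingWith (1/2) Φ := by
    refine ⟨by rw [← NNReal.coe_lt_coe]; norm_num, LipschitzWith.of_dist_le_mul fun g₁ g₂ => ?_⟩
    have h₁ := (mem_ball_iff g₁.1).1 g₁.2
    have h₂ := (mem_ball_iff g₂.1).1 g₂.2
    refine (BoundedContinuousFunction.dist_le (by positivity)).2 fun x => ?_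
    rw [hΦ, hΦ, dist_weight x.2]
    have := KK_diff h₁ h₂ (D := dist g₁ g₂) dist_nonneg (fun y hy => ?_) x.2
    · simpa using this
    · rw [← dist_weight hy, weight_unweight g₁.1 ⟨y, hy⟩, weight_unweight g₂.1 ⟨y, hy⟩]
      exact BoundedContinuousFunction.dist_coe_le_dist _
  have : CompleteSpace s := Metric.isClosed_closedBall.completeSpace_coe
  have : Nonempty s := ⟨⟨_, Metric.mem_closedBall_self
    (mul_nonneg (by norm_num) W₀norm_nonneg)⟩⟩
  set g := ContractingWith.fixedPoint Φ hcon
  have hg : Φ g = g := hcon.fixedPoint_isFixedPt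
  refine ⟨unweight g.1, (mem_ball_iff g.1).1 g.2, fun x hx => ?_⟩
  have h := hΦ g ⟨x, hx⟩
  rw [hg, ← weight_unweight g.1 ⟨x, hx⟩] at h
  have := pos_of_mem hx
  exact mul_left_cancel₀ (by positivity) h

/-- From `w - w₀ = -KK (RR w)` and `KK_deriv`; the constants add up to
`(5/8·0.0167·0.1188 + 0.391·1.002·8/85)·7.481 < 0.29`. -/
lemma deriv_bound {w : ℝ → ℝ} (hw : InBall w)
    (fw : ∀ x ∈ Ici LP1, w x = w₀r x - KK (RR w) x) {x : ℝ} (hx : x ∈ Ici LP1) :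
    |derivWithin w (Ici LP1) x - derivWithin w₀r (Ici LP1) x| ≤ 0.29 * x ^ (-(11 : ℝ)) := by
  have hx0 := pos_of_mem hx
  have hW := W₀norm_nonneg
  obtain ⟨d, hd⟩ := w₀r_deriv hx
  have hK := KK_deriv hw.adm hx
  have hu : UniqueDiffWithinAt ℝ (Ici LP1) x := uniqueDiffOn_Ici LP1 x hx
  rw [((hd.sub hK).congr_of_mem fw hx).derivWithin hu, hd.derivWithin hu, sub_sub_cancel_left,
    abs_neg]
  have hJ := JJ_bound (fun _ h => hw.RR_bound h) hx
  have hp := rpow_54 hx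
  have hk := hw.KK_bound hx
  have e1 : x ^ (-(11 : ℝ)) = x ^ (-(10 : ℝ)) / x := by
    rw [← Real.rpow_sub_one hx0.ne']; norm_num
  have e2 : x ^ (-(11 : ℝ)) = x ^ (-(3 : ℝ)/8) * x ^ (-(85 : ℝ)/8) := by
    rw [← Real.rpow_add hx0]; norm_num
  have t1 : |-(5/8) / x * KK (RR w) x| ≤ 5/8 * (0.0167 * 0.1188) * W₀norm * x ^ (-(11 : ℝ)) := by
    rw [abs_mul, abs_div, abs_of_pos hx0, abs_neg, abs_of_pos (by norm_num : (0:ℝ) < 5/8), e1]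
    calc _ ≤ 5/8 / x * (0.0167 * W₀norm * (0.1188 * x ^ (-(10 : ℝ)))) := by
          gcongr; exact hk.trans (by gcongr)
      _ = _ := by ring
  have t2 : |x ^ (-(3 : ℝ)/8) * JJ (RR w) x| ≤
      0.391 * 1.002 * (8/85) * W₀norm * x ^ (-(11 : ℝ)) := by
    rw [abs_mul, abs_of_pos (Real.rpow_pos_of_pos hx0 _), e2]
    calc _ ≤ x ^ (-(3 : ℝ)/8) * (0.391 * (1.002 * W₀norm) * (8/85) * x ^ (-(85 : ℝ)/8)) := by
          gcongr
      _ = _ := by ring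
  refine (abs_sub _ _).trans ((add_le_add t1 t2).trans ?_)
  rw [← add_mul, ← add_mul]
  gcongr
  linarith [W₀norm_le]

/-- With `δ = 2×10⁻³`, the map `𝒩` has a unique fixed point `w` in the
closed ball `{w : ‖w - w₀‖₁₀ ≤ δ‖w₀‖₁₀}` of continuous functions on `[L,∞)`; moreover
`|w(x) - w₀(x)| ≤ 0.0167‖w₀‖₁₀ x^{-45/4}` and `|w'(x) - w₀'(x)| ≤ 0.29 x^{-11}` for `x ≥ L`. -/
theorem statement13 :
    ∃ w : ℝ → ℝ,
      (ContinuousOn w (Set.Ici LP1) ∧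
        (∀ x ∈ Set.Ici LP1, x ^ (10 : ℕ) * |w x - w₀r x| ≤ 2e-3 * W₀norm) ∧
        (∀ x ∈ Set.Ici LP1, ((w x : ℝ) : ℂ) = calN w x)) ∧
      (∀ w' : ℝ → ℝ,
        (ContinuousOn w' (Set.Ici LP1) ∧
          (∀ x ∈ Set.Ici LP1, x ^ (10 : ℕ) * |w' x - w₀r x| ≤ 2e-3 * W₀norm) ∧
          (∀ x ∈ Set.Ici LP1, ((w' x : ℝ) : ℂ) = calN w' x)) →
        Set.EqOn w' w (Set.Ici LP1)) ∧
      (∀ x ∈ Set.Ici LP1,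
        |w x - w₀r x| ≤ 0.0167 * W₀norm * x ^ (-(45 : ℝ)/4) ∧
        |derivWithin w (Set.Ici LP1) x - derivWithin w₀r (Set.Ici LP1) x| ≤
          0.29 * x ^ (-(11 : ℝ))) := by
  obtain ⟨w, hw, fw⟩ := exists_fixed
  refine ⟨w, ⟨hw.1, hw.2, fun x hx => ?_⟩, fun v ⟨hv1, hv2, hv3⟩ => ?_, fun x hx => ⟨?_, ?_⟩⟩
  · rw [hw.calN_eq hx, ← fw x hx]
  · have hv : InBall v := ⟨hv1, hv2⟩
    exact uniq hw hv fw fun x hx => by exact_mod_cast (hv3 x hx).trans (hv.calN_eq hx)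
  · rw [fw x hx, sub_sub_cancel_left, abs_neg]
    exact hw.KK_bound hx
  · exact deriv_bound hw fw hx


end
end

section
/- Let y : [L_0, L] → ℝ be twice continuously differentiable with y''(x) + 6·y(x)² - x = 0 on [L_0, L], and suppose |y(L) - y_0(L)| ≤ 5.63×10^{-10} and |y'(L) - y_0'(L)| ≤ 2.13×10^{-9}. Then sup_{x∈[L_0,L]} |y(x) - y_0(x)| ≤ 1.75×10^{-7} and sup_{x∈[L_0,L]} |y'(x) - y_0'(x)| ≤ 1.61×10^{-7}. -/
/-!
Let `δ = y - y₀` and let `R = y₀'' + 6 y₀² - x` be the residual of the approximate solution. Then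
`δ'' = -12 y₀ δ - 6 δ² - R`. On `[L₀, L]` the function `y₀` is nonnegative and increasing, so in the
backward time `s = L - x` the energy `G = δ'² + 12 y₀ δ²` satisfies
`dG/ds ≤ 2 √G (|R| + 6 δ²)`. As long as `|δ| < 1.75·10⁻⁷`, the bound `|R| ≤ 8·10⁻⁹` gives
`√G ≤ 2.9·10⁻⁹ + 8.1·10⁻⁹ s` (`energy_bound`); this bounds `δ'`, and integration over `s ≤ 5.99`
gives `|δ| ≤ 1.64·10⁻⁷` (`displacement_bound`). The last bound is strictly below the threshold, so
the threshold is never reached (`error_bound`).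

The facts `y₀ ≥ 0`, `y₀' ≥ 0` and `|R| ≤ 8·10⁻⁹` are polynomial inequalities in `t = τ(x)` after
multiplication by a power of `w = x - x₀`: in `w² R` the poles of `y₀''` and `6 y₀²` cancel. Each of
them has the form `|p| ≤ q` with rational polynomials `p`, `q`. It is verified on a short list of
intervals by expanding `p` and `q` about the midpoint and checking that the constant coefficient of
`q` dominates all other coefficients (`abs_ev_le_of_absLeOn`); this finite computation in exact
rational arithmetic is evaluated by the kernel (`valq_cert`, `slopeq_cert`, `resq_cert`).
-/

open Set

noncomputable section

/-- The coefficients `c_0, …, c_22` of the polynomial `P_u`. -/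
def cP : ℕ → ℝ
  | 0 => 335867/539062
  | 1 => 419712/989125
  | 2 => -352463/3539236
  | 3 => 60789/1703279
  | 4 => -132842/11825541
  | 5 => 43961/54574472
  | 6 => 39599/12036926
  | 7 => -213665/48625258
  | 8 => 61644/14973337
  | 9 => -107283/33444500
  | 10 => 44761/18892011
  | 11 => -28249/13550715
  | 12 => 20641/14839893
  | 13 => 13459/92774551
  | 14 => -4992/34838093
  | 15 => -11771/8149937
  | 16 => 24115/27631671
  | 17 => 42106/39550107
  | 18 => -21163/32637441
  | 19 => -9782/15918509
  | 20 => 11581/32652169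
  | 21 => 14692/88640147
  | 22 => -12278/123249611
  | _ => 0

/-- The polynomial `P_u(t) = Σ_{k=0}^{22} c_k t^k`. -/
def Pu (t : ℝ) : ℝ := ∑ k ∈ Finset.range 23, cP k * t ^ k

def x₀ : ℝ := -770766/323285
def rP1 : ℝ := 7/10
def L₀ : ℝ := -49/100

/-- `τ(x) = (x - (L + x₀ + r)/2)/((L - x₀ - r)/2)`, mapping `[x₀+r, L]` onto `[-1,1]`. -/
def τP1 (x : ℝ) : ℝ := (x - (LP1 + x₀ + rP1) / 2) / ((LP1 - x₀ - rP1) / 2)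

/-- `y₀(x) = -1/(x-x₀)² + P_u(τ(x))` on `[x₀+r, L]`. -/
def y₀ (x : ℝ) : ℝ := -1 / (x - x₀) ^ 2 + Pu (τP1 x)

/-! ### Rational polynomials as coefficient lists -/

/-- The value at a real point of the polynomial with rational coefficients `a₀, a₁, …`
(constant term first). -/
def ev : List ℚ → ℝ → ℝ
  | [], _ => 0
  | a :: p, x => a + x * ev p x

/-- Sum of two coefficient lists. -/
def padd : List ℚ → List ℚ → List ℚ
  | [], q => q
  | a :: p, [] => a :: p
  | a :: p, b :: q => (a + b) :: padd p q

/-- Scalar multiple of a coefficient list. -/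
def psmul (k : ℚ) : List ℚ → List ℚ
  | [] => []
  | a :: p => (k * a) :: psmul k p

/-- Product of two coefficient lists. -/
def pmul : List ℚ → List ℚ → List ℚ
  | [], _ => []
  | a :: p, q => padd (psmul a q) (0 :: pmul p q)

/-- Formal derivative, from `(a + X p)' = p + X p'`. -/
def pder : List ℚ → List ℚ
  | [] => []
  | _ :: p => padd p (0 :: pder p)

/-- The polynomial `a + (c + r X) p`. -/
def pstep (c r a : ℚ) : List ℚ → List ℚ
  | [] => [a]
  | b :: p => (a + c * b) :: pstep c r (r * b) p

/-- The composition `p(c + r X)`, by Horner's scheme. -/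
def pshift (c r : ℚ) : List ℚ → List ℚ
  | [] => []
  | a :: p => pstep c r a (pshift c r p)

/-- Sum of the absolute values of the coefficients. -/
def pnorm : List ℚ → ℚ
  | [] => 0
  | a :: p => |a| + pnorm p

lemma ev_padd (p q : List ℚ) (x : ℝ) : ev (padd p q) x = ev p x + ev q x := by
  induction p generalizing q with
  | nil => simp [padd, ev]
  | cons a p ih =>
    cases q with
    | nil => simp [padd, ev]
    | cons b q => simp only [padd, ev, ih]; push_cast; ring

lemma ev_psmul (k : ℚ) (p : List ℚ) (x : ℝ) : ev (psmul k p) x = k * ev p x := by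
  induction p with
  | nil => simp [psmul, ev]
  | cons a p ih => simp only [psmul, ev, ih]; push_cast; ring

lemma ev_pmul (p q : List ℚ) (x : ℝ) : ev (pmul p q) x = ev p x * ev q x := by
  induction p with
  | nil => simp [pmul, ev]
  | cons a p ih => simp only [pmul, ev, ev_padd, ev_psmul, ih]; push_cast; ring

lemma ev_pstep (c r a : ℚ) (p : List ℚ) (x : ℝ) :
    ev (pstep c r a p) x = a + (c + r * x) * ev p x := by
  induction p generalizing a with
  | nil => simp [pstep, ev]
  | cons b p ih => simp only [pstep, ev, ih]; push_cast; ring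

lemma ev_pshift (c r : ℚ) (p : List ℚ) (x : ℝ) : ev (pshift c r p) x = ev p (c + r * x) := by
  induction p with
  | nil => simp [pshift, ev]
  | cons a p ih => simp only [pshift, ev, ev_pstep, ih]

lemma hasDerivAt_ev (p : List ℚ) (x : ℝ) : HasDerivAt (ev p) (ev (pder p) x) x := by
  induction p with
  | nil => simpa [ev, pder] using hasDerivAt_const x (0 : ℝ)
  | cons a p ih =>
    have h := ((hasDerivAt_id x).mul ih).const_add (a : ℝ)
    simp only [pder, ev_padd, ev]
    exact h.congr_deriv (by simp)

lemma abs_ev_le (p : List ℚ) (u : ℝ) (hu : |u| ≤ 1) : |ev p u| ≤ pnorm p := by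
  induction p with
  | nil => simp [ev, pnorm]
  | cons a p ih =>
    simp only [ev, pnorm]
    push_cast
    refine (abs_add_le _ _).trans ?_
    rw [abs_mul]
    have := mul_le_mul hu ih (abs_nonneg _) zero_le_one
    linarith

/-! ### Certified inequalities between polynomials on an interval -/

/-- `coeffDom p q` says that the constant coefficient of `q` dominates the sum of the absolute
values of all other coefficients of `q` and of all coefficients of `p`, so that `|p| ≤ q` on
`[-1, 1]`. -/
def coeffDom (p : List ℚ) : List ℚ → Bool
  | [] => decide (pnorm p ≤ 0)
  | b :: q => decide (pnorm p + pnorm q ≤ b)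

/-- `absLeOn p q g` applies the test `coeffDom` to `p` and `q`, re-expanded about the midpoint, on
every interval between consecutive entries of the increasing list `g`. -/
def absLeOn (p q : List ℚ) : List ℚ → Bool
  | [] => true
  | a :: g =>
    match g with
    | [] => true
    | b :: _ => decide (a < b) &&
        coeffDom (pshift ((a + b) / 2) ((b - a) / 2) p) (pshift ((a + b) / 2) ((b - a) / 2) q) &&
        absLeOn p q g

lemma abs_ev_le_of_coeffDom (p q : List ℚ) (h : coeffDom p q = true) (u : ℝ) (hu : |u| ≤ 1) :
    |ev p u| ≤ ev q u := by
  have hp := abs_ev_le p u hu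
  cases q with
  | nil =>
    have h1 : pnorm p ≤ 0 := by simpa [coeffDom] using h
    have h2 : (pnorm p : ℝ) ≤ 0 := by exact_mod_cast h1
    simp only [ev]
    linarith
  | cons b q =>
    have h1 : pnorm p + pnorm q ≤ b := by simpa [coeffDom] using h
    have h2 : (pnorm p : ℝ) + pnorm q ≤ b := by exact_mod_cast h1
    have h3 : |u * ev q u| ≤ pnorm q := by
      rw [abs_mul]
      have := mul_le_mul hu (abs_ev_le q u hu) (abs_nonneg _) zero_le_one
      linarith
    have := neg_abs_le (u * ev q u)
    simp only [ev]
    linarith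

lemma abs_ev_le_of_absLeOn (p q : List ℚ) (a : ℚ) (g : List ℚ) (h : absLeOn p q (a :: g) = true)
    (hg : g ≠ []) (x : ℝ) (hx : (a : ℝ) ≤ x) (hx' : x ≤ (g.getLast hg : ℚ)) :
    |ev p x| ≤ ev q x := by
  induction g generalizing a with
  | nil => exact absurd rfl hg
  | cons b g ih =>
    rw [absLeOn] at h
    simp only [Bool.and_eq_true, decide_eq_true_eq] at h
    obtain ⟨⟨hab, hc⟩, hr⟩ := h
    have hab' : (a : ℝ) < b := by exact_mod_cast hab
    -- if `x ≤ b`, then `x` is the image of some `u ∈ [-1, 1]` under the affine map onto `[a, b]`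
    by_cases hxb : x ≤ b
    · have hu : |(2 * x - a - b) / (b - a)| ≤ 1 := by
        rw [abs_div, abs_of_pos (sub_pos.2 hab'), div_le_one (sub_pos.2 hab'), abs_le]
        constructor <;> linarith
      have h0 := abs_ev_le_of_coeffDom _ _ hc _ hu
      rw [ev_pshift, ev_pshift] at h0
      have hne : (b : ℝ) - a ≠ 0 := (sub_pos.2 hab').ne'
      have hxe : (((a + b) / 2 : ℚ) : ℝ) + ((b - a) / 2 : ℚ) * ((2 * x - a - b) / (b - a)) = x := by
        push_cast
        field_simp
        ring
      rwa [hxe] at h0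
    · push Not at hxb
      cases g with
      | nil => simp at hx'; linarith
      | cons c g => exact ih b hr (by simp) hxb.le (by simpa using hx')

/-! ### The polynomial inequalities -/

/-- The coefficients of `P_u`. -/
def cs : List ℚ :=
  [335867/539062, 419712/989125, -352463/3539236, 60789/1703279, -132842/11825541,
   43961/54574472, 39599/12036926, -213665/48625258, 61644/14973337, -107283/33444500,
   44761/18892011, -28249/13550715, 20641/14839893, 13459/92774551, -4992/34838093,
   -11771/8149937, 24115/27631671, 42106/39550107, -21163/32637441, -9782/15918509,
   11581/32652169, 14692/88640147, -12278/123249611]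

/-- The half-length `h = (L - x₀ - r)/2` of the interval `[x₀ + r, L]`. -/
def hq : ℚ := 2322534/646570

/-- The midpoint `m = (L + x₀ + r)/2` of the interval `[x₀ + r, L]`. -/
def mq : ℚ := 1233601/646570

/-- `w = x - x₀` as a polynomial in `t = τ(x)`, namely `(h + r) + h t`. -/
def wq : List ℚ := [hq + 7/10, hq]

/-- `w² R` as a polynomial in `t = τ(x)`, where `R = y₀'' + 6 y₀² - x` is the residual of `y₀`.
The poles of `y₀''` and `6 y₀²` cancel, which leaves
`w² R = w² P''(t)/h² - 12 P(t) + 6 w² P(t)² - w² x`. -/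
def resq : List ℚ :=
  padd (pmul (pmul wq wq)
    (padd (psmul (1 / hq ^ 2) (pder (pder cs)))
      (padd (psmul 6 (pmul cs cs)) [-mq, -hq])))
    (psmul (-12) cs)

/-- `w² y₀` as a polynomial in `t`. -/
def valq : List ℚ := padd (pmul (pmul wq wq) cs) [-1]

/-- `h w³ y₀'` as a polynomial in `t`. -/
def slopeq : List ℚ := padd [2 * hq] (pmul (pmul wq (pmul wq wq)) (pder cs))

/-- Break points for the bound on the residual, starting just left of `τ(L₀) ≈ -0.6676`; they are
chosen fine enough for the coefficient test, the mesh being finest towards `1`. -/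
def gridR : List ℚ :=
  [-67/100, -56/100, -47/100, -34/100, -15/100, -1/100, 12/100, 33/100, 50/100, 66/100, 80/100,
   90/100, 97/100, 1]

/-- `y₀ ≥ 0`, multiplied by `w²`; `y₀(L₀) ≈ 0.005` is small, hence the fine mesh on the left. -/
lemma valq_cert : absLeOn [] valq
    [-67/100, -655/1000, -64/100, -61/100, -55/100, -45/100, -20/100, 30/100, 1] = true := by
  decide +kernel

/-- `y₀' ≥ 0`, multiplied by `h w³`. -/
lemma slopeq_cert : absLeOn [] slopeq [-67/100, -1/4, 1/5, 1] = true := by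
  decide +kernel

/-- The residual satisfies `|R| ≤ 8·10⁻⁹`, multiplied by `w²`. -/
lemma resq_cert : absLeOn resq (psmul (8 / 10 ^ 9) (pmul wq wq)) gridR = true := by
  decide +kernel

/-! ### The approximate solution `y₀` -/

lemma τP1_eq (x : ℝ) : τP1 x = (x - mq) / hq := by
  simp only [τP1, LP1, x₀, rP1, mq, hq]
  push_cast
  norm_num

lemma Pu_eq (t : ℝ) : Pu t = ev cs t := by
  simp only [Pu, Finset.sum_range_succ, Finset.sum_range_zero, cP, cs, ev]
  push_cast
  ring

/-- The derivative of `y₀` away from the pole `x₀`. -/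
def y₀d (x : ℝ) : ℝ := 2 / (x - x₀) ^ 3 + ev (pder cs) (τP1 x) / hq

/-- The second derivative of `y₀` away from the pole `x₀`. -/
def y₀dd (x : ℝ) : ℝ := -6 / (x - x₀) ^ 4 + ev (pder (pder cs)) (τP1 x) / hq ^ 2

lemma hasDerivAt_τP1 (x : ℝ) : HasDerivAt τP1 (1 / hq) x := by
  have h : τP1 = fun x : ℝ => (x - mq) / hq := funext τP1_eq
  rw [h]
  exact ((hasDerivAt_id x).sub_const _).div_const _

lemma hasDerivAt_y₀ {x : ℝ} (hx : x - x₀ ≠ 0) : HasDerivAt y₀ (y₀d x) x := by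
  have hw : HasDerivAt (fun x => x - x₀) 1 x := (hasDerivAt_id x).sub_const _
  have h1 := (hasDerivAt_const x (-1 : ℝ)).div (hw.pow 2) (pow_ne_zero 2 hx)
  have h2 := (hasDerivAt_ev cs (τP1 x)).comp x (hasDerivAt_τP1 x)
  have h3 : y₀ = fun x => -1 / (x - x₀) ^ 2 + ev cs (τP1 x) :=
    funext fun x => by rw [y₀, Pu_eq]
  rw [h3]
  refine (h1.add h2).congr_deriv ?_
  simp only [y₀d, Pi.pow_apply]
  field_simp
  norm_num
  ring

lemma hasDerivAt_y₀d {x : ℝ} (hx : x - x₀ ≠ 0) : HasDerivAt y₀d (y₀dd x) x := by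
  have hw : HasDerivAt (fun x => x - x₀) 1 x := (hasDerivAt_id x).sub_const _
  have h1 := (hasDerivAt_const x (2 : ℝ)).div (hw.pow 3) (pow_ne_zero 3 hx)
  have h2 := ((hasDerivAt_ev (pder cs) (τP1 x)).comp x (hasDerivAt_τP1 x)).div_const (hq : ℝ)
  refine (h1.add h2).congr_deriv ?_
  simp only [y₀dd, Pi.pow_apply]
  field_simp
  norm_num
  ring

lemma hq_pos : (0 : ℝ) < hq := by norm_num [hq]

lemma w_pos {x : ℝ} (hx : x ∈ Icc L₀ LP1) : 0 < x - x₀ := by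
  have := hx.1
  simp only [L₀, x₀] at *
  linarith

lemma w_eq (x : ℝ) : ev wq (τP1 x) = x - x₀ := by
  rw [τP1_eq]
  have := hq_pos.ne'
  simp only [wq, ev, x₀]
  push_cast
  field_simp
  norm_num [mq, hq]
  ring

lemma x_eq (x : ℝ) : (mq : ℝ) + hq * τP1 x = x := by
  rw [τP1_eq]
  have := hq_pos.ne'
  field_simp
  ring

lemma τP1_mem {x : ℝ} (hx : x ∈ Icc L₀ LP1) :
    ((-67/100 : ℚ) : ℝ) ≤ τP1 x ∧ τP1 x ≤ ((1 : ℚ) : ℝ) := by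
  have h := hx
  simp only [L₀, LP1, mem_Icc] at h
  rw [τP1_eq, le_div_iff₀ hq_pos, div_le_iff₀ hq_pos]
  norm_num [mq, hq]
  constructor <;> linarith

lemma y₀_nonneg {x : ℝ} (hx : x ∈ Icc L₀ LP1) : 0 ≤ y₀ x := by
  have h := abs_ev_le_of_absLeOn _ _ _ _ valq_cert (by simp) (τP1 x) (τP1_mem hx).1
    (τP1_mem hx).2
  have hw := w_pos hx
  simp only [valq, ev_padd, ev_pmul, w_eq, ev] at h
  have h' := (abs_nonneg _).trans h
  have : y₀ x = ((x - x₀) * (x - x₀) * ev cs (τP1 x) - 1) / (x - x₀) ^ 2 := by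
    rw [y₀, Pu_eq]
    field_simp
    ring
  rw [this]
  refine div_nonneg ?_ (by positivity)
  push_cast at h'
  linarith

lemma y₀d_nonneg {x : ℝ} (hx : x ∈ Icc L₀ LP1) : 0 ≤ y₀d x := by
  have h := abs_ev_le_of_absLeOn _ _ _ _ slopeq_cert (by simp) (τP1 x) (τP1_mem hx).1
    (τP1_mem hx).2
  have hw := w_pos hx
  have hh := hq_pos
  simp only [slopeq, ev_padd, ev_pmul, w_eq, ev] at h
  have h' := (abs_nonneg _).trans h
  have : y₀d x = (2 * hq + (x - x₀) ^ 3 * ev (pder cs) (τP1 x)) / (hq * (x - x₀) ^ 3) := by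
    rw [y₀d]
    field_simp
  rw [this]
  refine div_nonneg ?_ (by positivity)
  push_cast at h'
  linarith

/-- The residual bound, obtained by dividing the polynomial inequality by `w² > 0`. -/
lemma residual_le {x : ℝ} (hx : x ∈ Icc L₀ LP1) : |y₀dd x + 6 * y₀ x ^ 2 - x| ≤ 8e-9 := by
  have h := abs_ev_le_of_absLeOn _ _ _ _ resq_cert (by simp) (τP1 x) (τP1_mem hx).1
    (τP1_mem hx).2
  have hw := w_pos hx
  have hh := hq_pos
  simp only [resq, ev_padd, ev_pmul, ev_psmul, w_eq, ev] at h
  have : y₀dd x + 6 * y₀ x ^ 2 - x = ((x - x₀) * (x - x₀) *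
      (1 / hq ^ 2 * ev (pder (pder cs)) (τP1 x) + (6 * (ev cs (τP1 x) * ev cs (τP1 x)) +
        -(mq + hq * τP1 x))) + -12 * ev cs (τP1 x)) / (x - x₀) ^ 2 := by
    rw [y₀dd, y₀, Pu_eq, x_eq]
    field_simp
    ring
  rw [this, abs_div, abs_of_pos (pow_pos hw 2), div_le_iff₀ (pow_pos hw 2)]
  push_cast at h
  rw [show (8e-9 : ℝ) * (x - x₀) ^ 2 = 8 / 10 ^ 9 * ((x - x₀) * (x - x₀)) by norm_num; ring]
  refine le_trans (le_of_eq (congrArg _ ?_)) h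
  ring

lemma y₀_LP1_le : y₀ LP1 ≤ 1 := by
  have ht : τP1 LP1 = 1 := by norm_num [τP1, LP1, x₀, rP1]
  rw [y₀, Pu_eq, ht]
  norm_num [cs, ev, LP1, x₀]

/-! ### Energy estimate -/

/-- Energy estimate for `z'' = -a z + f` with `a ≥ 0` nonincreasing: the energy `G = v² + a z²`,
`v = z'`, satisfies `G' = 2 v f + a' z² ≤ 2 |f| √G`, so `√G` grows at rate at most `sup |f|`.
This is carried out by comparing `G` with `(A + ε s)²`. -/
lemma energy_bound {T A ε : ℝ} (hA : 0 < A) (hε : 0 < ε) (z v a a' f : ℝ → ℝ)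
    (hz : ∀ s ∈ Icc 0 T, HasDerivWithinAt z (v s) (Icc 0 T) s)
    (hv : ∀ s ∈ Icc 0 T, HasDerivWithinAt v (-a s * z s + f s) (Icc 0 T) s)
    (ha : ∀ s ∈ Icc 0 T, HasDerivWithinAt a (a' s) (Icc 0 T) s)
    (ha0 : ∀ s ∈ Icc 0 T, 0 ≤ a s) (ha' : ∀ s ∈ Icc 0 T, a' s ≤ 0)
    (hf : ∀ s ∈ Ico 0 T, |f s| < ε)
    (h0 : v 0 ^ 2 + a 0 * z 0 ^ 2 ≤ A ^ 2) :
    ∀ s ∈ Icc 0 T, |v s| ≤ A + ε * s := by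
  have hG : ∀ s ∈ Icc 0 T, HasDerivWithinAt (fun s => v s ^ 2 + a s * z s ^ 2)
      (2 * v s * f s + a' s * z s ^ 2) (Icc 0 T) s := fun s hs => by
    refine (((hv s hs).pow 2).add ((ha s hs).mul ((hz s hs).pow 2))).congr_deriv ?_
    simp only [Pi.pow_apply]
    push_cast
    ring
  have hB : ∀ s : ℝ, HasDerivAt (fun s => (A + ε * s) ^ 2) (2 * (A + ε * s) * ε) s := fun s => by
    have h := ((((hasDerivAt_id s).const_mul ε).const_add A).pow 2)
    refine h.congr_deriv ?_
    simp
  have abs_le_of : ∀ s ∈ Icc 0 T, v s ^ 2 + a s * z s ^ 2 ≤ (A + ε * s) ^ 2 →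
      |v s| ≤ A + ε * s := fun s hs h => by
    have h1 : 0 < A + ε * s := by have := mul_nonneg hε.le hs.1; linarith
    have h2 := mul_nonneg (ha0 s hs) (sq_nonneg (z s))
    exact abs_le_of_sq_le_sq (by linarith) h1.le
  intro s hs
  refine abs_le_of s hs ?_
  refine image_le_of_deriv_right_lt_deriv_boundary' (f := fun s => v s ^ 2 + a s * z s ^ 2)
    (fun s hs => (hG s hs).continuousWithinAt)
    (fun s hs => (hG s (Ico_subset_Icc_self hs)).mono_of_mem_nhdsWithin
      (Icc_mem_nhdsGE_of_mem hs)) (by simpa using h0)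
    (fun s _ => (hB s).continuousAt.continuousWithinAt)
    (fun s _ => (hB s).hasDerivWithinAt) ?_ hs
  intro s hs heq
  have hs' := Ico_subset_Icc_self hs
  have h1 : 0 < A + ε * s := by have := mul_nonneg hε.le hs.1; linarith
  have h2 := abs_le_of s hs' heq.le
  have h3 : v s * f s ≤ (A + ε * s) * |f s| := by
    calc v s * f s ≤ |v s| * |f s| := by rw [← abs_mul]; exact le_abs_self _
      _ ≤ _ := by gcongr
  have h4 := mul_lt_mul_of_pos_left (hf s hs) h1
  have h5 := mul_nonneg (neg_nonneg.2 (ha' s hs')) (sq_nonneg (z s))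
  linarith

/-- A bound on `z'` linear in `s` integrates to a quadratic bound on `z`. -/
lemma displacement_bound {T A ε C : ℝ} (z v : ℝ → ℝ)
    (hz : ∀ s ∈ Icc 0 T, HasDerivWithinAt z (v s) (Icc 0 T) s)
    (hv : ∀ s ∈ Icc 0 T, |v s| ≤ A + ε * s) (h0 : |z 0| ≤ C) :
    ∀ s ∈ Icc 0 T, |z s| ≤ C + A * s + ε * s ^ 2 / 2 := by
  have hB : ∀ s : ℝ, HasDerivAt (fun s => C + A * s + ε * s ^ 2 / 2) (A + ε * s) s := fun s => by
    have h := (((hasDerivAt_id s).const_mul A).const_add C).add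
      ((((hasDerivAt_id s).pow 2).const_mul ε).div_const 2)
    refine h.congr_deriv ?_
    simp
    ring
  intro s hs
  exact image_norm_le_of_norm_deriv_right_le_deriv_boundary' (f := z)
    (fun s hs => (hz s hs).continuousWithinAt)
    (fun s hs => (hz s (Ico_subset_Icc_self hs)).mono_of_mem_nhdsWithin
      (Icc_mem_nhdsGE_of_mem hs)) (by simpa using h0)
    (fun s _ => (hB s).continuousAt.continuousWithinAt)
    (fun s _ => (hB s).hasDerivWithinAt)
    (fun s hs => hv s (Ico_subset_Icc_self hs)) hs

/-- The nonlinear error equation `z'' = -a z - 6 z² - ρ`, by continuation: as long as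
`|z| < 1.75·10⁻⁷`, the forcing `6 z² + |ρ|` is below `8.1·10⁻⁹`, and the energy estimate gives a
bound on `|z|` that is strictly smaller than `1.75·10⁻⁷`, so this threshold is never reached. -/
lemma error_bound (z v a a' ρ : ℝ → ℝ)
    (hz : ∀ s ∈ Icc 0 5.99, HasDerivWithinAt z (v s) (Icc 0 5.99) s)
    (hv : ∀ s ∈ Icc 0 5.99,
      HasDerivWithinAt v (-a s * z s + (-6 * z s ^ 2 - ρ s)) (Icc 0 5.99) s)
    (ha : ∀ s ∈ Icc 0 5.99, HasDerivWithinAt a (a' s) (Icc 0 5.99) s)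
    (ha0 : ∀ s ∈ Icc 0 5.99, 0 ≤ a s) (ha' : ∀ s ∈ Icc 0 5.99, a' s ≤ 0)
    (hρ : ∀ s ∈ Icc 0 5.99, |ρ s| ≤ 8e-9) (ha12 : a 0 ≤ 12)
    (hz0 : |z 0| ≤ 5.63e-10) (hv0 : |v 0| ≤ 2.13e-9) :
    ∀ s ∈ Icc (0 : ℝ) 5.99, |z s| ≤ 1.75e-7 ∧ |v s| ≤ 1.61e-7 := by
  have h0 : v 0 ^ 2 + a 0 * z 0 ^ 2 ≤ (2.9e-9) ^ 2 := by
    have h1 : v 0 ^ 2 ≤ (2.13e-9) ^ 2 := sq_le_sq' (abs_le.1 hv0).1 (abs_le.1 hv0).2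
    have h2 : z 0 ^ 2 ≤ (5.63e-10) ^ 2 := sq_le_sq' (abs_le.1 hz0).1 (abs_le.1 hz0).2
    have h3 : a 0 * z 0 ^ 2 ≤ 12 * (5.63e-10) ^ 2 :=
      mul_le_mul ha12 h2 (sq_nonneg _) (by norm_num)
    norm_num at h1 h3 ⊢
    linarith
  have step : ∀ S : ℝ, S ≤ 5.99 → (∀ s ∈ Ico 0 S, |z s| < 1.75e-7) →
      ∀ s ∈ Icc 0 S, |z s| < 1.75e-7 ∧ |v s| ≤ 1.61e-7 := by
    intro S hS hlt
    have hsub : Icc 0 S ⊆ Icc (0 : ℝ) 5.99 := Icc_subset_Icc le_rfl hS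
    have hvb := energy_bound (T := S) (A := 2.9e-9) (ε := 8.1e-9) (by norm_num) (by norm_num)
      z v a a' (fun s => -6 * z s ^ 2 - ρ s)
      (fun s hs => (hz s (hsub hs)).mono hsub) (fun s hs => (hv s (hsub hs)).mono hsub)
      (fun s hs => (ha s (hsub hs)).mono hsub) (fun s hs => ha0 s (hsub hs))
      (fun s hs => ha' s (hsub hs))
      (fun s hs => by
        have h1 := hρ s (hsub (Ico_subset_Icc_self hs))
        have h2 := hlt s hs
        have h3 : z s ^ 2 ≤ (1.75e-7) ^ 2 := sq_le_sq' (abs_lt.1 h2).1.le (abs_lt.1 h2).2.le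
        have h4 := sq_nonneg (z s)
        rw [abs_le] at h1
        rw [abs_lt]
        norm_num at h1 h3 ⊢
        constructor <;> linarith) h0
    have hzb := displacement_bound (C := 5.63e-10) z v
      (fun s hs => (hz s (hsub hs)).mono hsub) hvb hz0
    intro s hs
    have hs1 : s ≤ 5.99 := hs.2.trans hS
    have hs2 : s ^ 2 ≤ 5.99 ^ 2 := pow_le_pow_left₀ hs.1 hs1 2
    have h1 := hvb s hs
    have h2 := hzb s hs
    norm_num at h1 h2 hs1 hs2 ⊢
    constructor <;> linarith
  have hcont : ContinuousOn (fun s => |z s|) (Icc 0 5.99) :=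
    continuous_abs.comp_continuousOn fun s hs => (hz s hs).continuousWithinAt
  have hall : ∀ s ∈ Icc (0 : ℝ) 5.99, |z s| < 1.75e-7 := by
    by_contra! hne
    obtain ⟨s, hs, hsM⟩ := hne
    -- the first point at which the threshold is reached
    have hcl : IsClosed (Icc (0 : ℝ) 5.99 ∩ (fun s => |z s|) ⁻¹' Ici 1.75e-7) :=
      hcont.preimage_isClosed_of_isClosed isClosed_Icc isClosed_Ici
    obtain ⟨σ, ⟨hσ, hσM⟩, hmin⟩ :=
      (isCompact_Icc.of_isClosed_subset hcl inter_subset_left).exists_isLeast ⟨s, hs, hsM⟩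
    have := (step σ hσ.2 (fun u hu => by
      by_contra! hu'
      exact absurd (hmin ⟨⟨hu.1, hu.2.le.trans hσ.2⟩, hu'⟩) (not_le.2 hu.2)) σ
      ⟨hσ.1, le_rfl⟩).1
    exact absurd hσM (not_le.2 this)
  exact fun s hs => ⟨(hall s hs).le,
    (step 5.99 le_rfl (fun u hu => hall u (Ico_subset_Icc_self hu)) s hs).2⟩

/-! ### The error bound for `y₀` -/

/-- If `y` is a `C²` solution of P-1 on `[L₀, L]` with
`|y(L) - y₀(L)| ≤ 5.63×10⁻¹⁰` and `|y'(L) - y₀'(L)| ≤ 2.13×10⁻⁹`, then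
`|y - y₀| ≤ 1.75×10⁻⁷` and `|y' - y₀'| ≤ 1.61×10⁻⁷` on `[L₀, L]`. -/
theorem statement15 (y yd ydd : ℝ → ℝ)
    (hy : ∀ x ∈ Icc L₀ LP1, HasDerivWithinAt y (yd x) (Icc L₀ LP1) x)
    (hyd : ∀ x ∈ Icc L₀ LP1, HasDerivWithinAt yd (ydd x) (Icc L₀ LP1) x)
    (hydd : ContinuousOn ydd (Icc L₀ LP1))
    (hode : ∀ x ∈ Icc L₀ LP1, ydd x + 6 * (y x) ^ 2 - x = 0)
    (hinit : |y LP1 - y₀ LP1| ≤ 5.63e-10)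
    (hinitd : |yd LP1 - deriv y₀ LP1| ≤ 2.13e-9) :
    ∀ x ∈ Icc L₀ LP1, |y x - y₀ x| ≤ 1.75e-7 ∧ |yd x - deriv y₀ x| ≤ 1.61e-7 := by
  have hmem : ∀ s ∈ Icc (0 : ℝ) 5.99, LP1 - s ∈ Icc L₀ LP1 := fun s hs => by
    obtain ⟨h1, h2⟩ := hs
    norm_num [LP1, L₀] at *
    constructor <;> linarith
  have hsub : ∀ s : ℝ, HasDerivWithinAt (fun s => LP1 - s) (-1) (Icc 0 5.99) s := fun s =>
    ((hasDerivAt_id s).const_sub LP1).hasDerivWithinAt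
  have hd0 : ∀ x ∈ Icc L₀ LP1, deriv y₀ x = y₀d x := fun x hx =>
    (hasDerivAt_y₀ (w_pos hx).ne').deriv
  have hL : LP1 ∈ Icc L₀ LP1 := by norm_num [LP1, L₀]
  -- the backward time `s = L - x` turns the terminal condition at `L` into an initial one
  have key := error_bound (fun s => y (LP1 - s) - y₀ (LP1 - s))
    (fun s => -(yd (LP1 - s) - y₀d (LP1 - s))) (fun s => 12 * y₀ (LP1 - s))
    (fun s => -12 * y₀d (LP1 - s))
    (fun s => y₀dd (LP1 - s) + 6 * y₀ (LP1 - s) ^ 2 - (LP1 - s))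
    (fun s hs => by
      have hx := hmem s hs
      have h1 := (hy _ hx).sub (hasDerivAt_y₀ (w_pos hx).ne').hasDerivWithinAt
      refine (h1.comp s (hsub s) hmem).congr_deriv ?_
      ring)
    (fun s hs => by
      have hx := hmem s hs
      have h1 := ((hyd _ hx).sub (hasDerivAt_y₀d (w_pos hx).ne').hasDerivWithinAt).neg
      refine (h1.comp s (hsub s) hmem).congr_deriv ?_
      linear_combination hode _ hx)
    (fun s hs => by
      have hx := hmem s hs
      have h1 := ((hasDerivAt_y₀ (w_pos hx).ne').const_mul 12).hasDerivWithinAt (s := Icc L₀ LP1)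
      refine (h1.comp s (hsub s) hmem).congr_deriv ?_
      ring)
    (fun s hs => by have := y₀_nonneg (hmem s hs); linarith)
    (fun s hs => by have := y₀d_nonneg (hmem s hs); linarith)
    (fun s hs => residual_le (hmem s hs))
    (by have := y₀_LP1_le; simp only [sub_zero]; linarith)
    (by simpa using hinit)
    (by rw [hd0 _ hL] at hinitd; simpa [abs_sub_comm] using hinitd)
  intro x hx
  have hs : LP1 - x ∈ Icc (0 : ℝ) 5.99 := by
    obtain ⟨h1, h2⟩ := hx
    norm_num [LP1, L₀] at *
    constructor <;> linarith
  have h := key _ hs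
  simp only [sub_sub_cancel, abs_neg] at h
  rw [hd0 x hx]
  exact h

end
end
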